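/- arXiv:2504.05949 — 2 statements merged into one kernel-verified Lean document; each statement's English description precedes it below -/
import Mathlib

section
/- Let n ≥ 1, 1 < p < ∞ and 0 < s < 1, and let δ(ξ)^s = ((x₁)₊)^s (equal to x₁^s for x₁ > 0 and 0 otherwise). Then: (a) δ^s ∈ W^{s,p}_{loc}(ℍⁿ₊) ∩ L^{p−1}_{sp}(ℍⁿ); and (b) for every nonnegative φ ∈ W^{s,p}(ℍⁿ₊) with compact support contained in ℍⁿ₊ (extended by 0 to ℍⁿ), ∫_{ℍⁿ} ∫_{ℍⁿ} J_p(((x₁)₊)^s − ((x₁')₊)^s) (φ(ξ) − φ(ξ')) / d(ξ⁻¹∘ξ')^{Q+sp} dξ' dξ = 0. -/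
/-!
The function `δ^s = ((x₁)₊)^s` depends on `x₁` only, so the nonlocal operator acting on it sees the
kernel `d(ξ⁻¹∘ξ')^{-(Q+sp)}` only through its marginal in `x₁' - x₁`. Left translations, the
parabolic dilations and inversion show that this marginal is even and homogeneous, hence equal
to `κ |σ|^{-1-sp} dσ` (`nu_eq`); its finiteness away from `0` comes from the integrability of
`(1+d)^{-(Q+sp)}`.

Rescaling by `x₁` turns the operator, truncated to the pairs whose first coordinates have a ratio
outside `[a, 1/a]`, into `x₁^{-s}` times a number: a one-dimensional integral of
`J_p(1 - τ₊^s) |1-τ|^{-1-sp}`. The exponent `s` is exactly the one for which folding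
`τ ↦ 1/τ` leaves a total derivative, and the integral equals
`prim p s a / (sp)` with `prim p s a = (1-a^s)^p (1-a)^{-sp}` (`integral_trunc`). This tends to `0`
as `a → 1⁻` because `s < 1` (`tendsto_prim`).

Since the kernel is antisymmetric, the truncated weak form is twice the pairing of `φ` with the
truncated operator (`IsTest.integral_far`), and so it tends to `0`. On the other hand it tends to
the full weak form by dominated convergence: the weak form is absolutely integrable on pairs, far
pairs being covered by the one-dimensional bound and comparable pairs by the energies of `δ^s`
(`near_bound`) and of `φ` (`IsTest.integrable_near`). Fubini then gives the iterated integral.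
Absolute integrability uses `1 < p`, `s < 1` and the compactness of the support of `φ` inside the
half-space.
-/

open MeasureTheory Real Filter Topology ENNReal

noncomputable section

/-- The Heisenberg group `ℍⁿ` as `ℝⁿ × ℝⁿ × ℝ`. -/
abbrev Heis (n : ℕ) : Type := (Fin n → ℝ) × (Fin n → ℝ) × ℝ

/-- Group law `ξ ∘ ξ' = (x+x', y+y', t+t'+2⟨y,x'⟩−2⟨x,y'⟩)`. -/
def Hmul {n : ℕ} (a b : Heis n) : Heis n :=
  (a.1 + b.1, a.2.1 + b.2.1,
    a.2.2 + b.2.2 + 2 * (∑ i, a.2.1 i * b.1 i) - 2 * (∑ i, a.1 i * b.2.1 i))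

/-- Group inverse `ξ⁻¹ = −ξ`. -/
def Hinv {n : ℕ} (a : Heis n) : Heis n := (-a.1, -a.2.1, -a.2.2)

/-- Squared Euclidean norm of the horizontal part `z = (x,y) ∈ ℝ^{2n}`. -/
def zsq {n : ℕ} (a : Heis n) : ℝ := (∑ i, (a.1 i) ^ 2) + (∑ i, (a.2.1 i) ^ 2)

/-- Euclidean norm `|z|` of the horizontal part. -/
def znorm {n : ℕ} (a : Heis n) : ℝ := Real.sqrt (zsq a)

/-- The Koranyi–Folland gauge `d(ξ) = (|z|⁴ + t²)^{1/4}`. -/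
def hd {n : ℕ} (a : Heis n) : ℝ := ((zsq a) ^ 2 + (a.2.2) ^ 2) ^ ((1 : ℝ) / 4)

/-- Homogeneous dimension `Q = 2n + 2` (as a real number). -/
def hQ (n : ℕ) : ℝ := 2 * n + 2

/-- First coordinate `x₁` of a point of `ℍⁿ`. -/
def x1 {n : ℕ} (a : Heis n) : ℝ := if h : 0 < n then a.1 ⟨0, h⟩ else 0

/-- The half-space `ℍⁿ₊ = {ξ : x₁ > 0}`. -/
def halfSpace (n : ℕ) : Set (Heis n) := {a | 0 < x1 a}

/-- Euclidean distance `|z - z'|` of the horizontal parts. -/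
def zdist {n : ℕ} (a b : Heis n) : ℝ := znorm (Hmul (Hinv a) b)

/-- `J_p(t) = |t|^{p-2} t`. -/
def Jp (p t : ℝ) : ℝ := |t| ^ (p - 2) * t

/-- The Gagliardo-type seminorm (to the `p`-th power)
`[f]_{s,p,α,Ω}^p = ∫_Ω ∫_Ω |f(ξ)-f(ξ')|^p / (d(ξ⁻¹∘ξ')^{Q+sp} |z-z'|^α)`. -/
def gagSem {n : ℕ} (p s α : ℝ) (Ω : Set (Heis n)) (f : Heis n → ℝ) : ℝ≥0∞ :=
  ∫⁻ ξ in Ω, ∫⁻ ξ' in Ω, ENNReal.ofReal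
    (|f ξ - f ξ'| ^ p / (hd (Hmul (Hinv ξ) ξ') ^ (hQ n + s * p) * zdist ξ ξ' ^ α))

/-- The seminorm for `α = 0` (no horizontal weight). -/
def gagSem0 {n : ℕ} (p s : ℝ) (Ω : Set (Heis n)) (f : Heis n → ℝ) : ℝ≥0∞ :=
  ∫⁻ ξ in Ω, ∫⁻ ξ' in Ω, ENNReal.ofReal
    (|f ξ - f ξ'| ^ p / hd (Hmul (Hinv ξ) ξ') ^ (hQ n + s * p))

/-- The strip `𝒟_{r,R} = {ξ : r < x₁ < R}`. -/
def strip (n : ℕ) (r R : ℝ) : Set (Heis n) := {ξ | r < x1 ξ ∧ x1 ξ < R}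

/-- `f ∈ W^{s,p,α}_{loc(x₁)}(ℍⁿ₊)`. -/
def MemWlocx1 (n : ℕ) (p s α : ℝ) (f : Heis n → ℝ) : Prop :=
  Measurable f ∧ ∀ r R : ℝ, 0 < r → r < R →
    (∫⁻ ξ in strip n r R, ENNReal.ofReal (|f ξ| ^ p)) < ⊤ ∧
    gagSem p s α (strip n r R) f < ⊤

/-- `f ∈ L^{p-1}_{sp,α}(ℍⁿ)`. -/
def MemLsp (n : ℕ) (p s α : ℝ) (f : Heis n → ℝ) : Prop :=
  Measurable f ∧
  (∀ K : Set (Heis n), IsCompact K →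
    (∫⁻ ξ in K, ENNReal.ofReal (|f ξ| ^ (p - 1))) < ⊤) ∧
  (∫⁻ ξ, ENNReal.ofReal (|f ξ| ^ (p - 1) /
      ((1 + hd ξ) ^ (hQ n + s * p) * (1 + znorm ξ) ^ α))) < ⊤

/-- `φ ∈ W^{s,p,α}(Ω)`. -/
def MemW (n : ℕ) (p s α : ℝ) (Ω : Set (Heis n)) (φ : Heis n → ℝ) : Prop :=
  Measurable φ ∧ (∫⁻ ξ in Ω, ENNReal.ofReal (|φ ξ| ^ p)) < ⊤ ∧ gagSem p s α Ω φ < ⊤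

/-- `φ ∈ W^{s,p}(Ω)` (the case `α = 0`). -/
def MemW0 (n : ℕ) (p s : ℝ) (Ω : Set (Heis n)) (φ : Heis n → ℝ) : Prop :=
  Measurable φ ∧ (∫⁻ ξ in Ω, ENNReal.ofReal (|φ ξ| ^ p)) < ⊤ ∧ gagSem0 p s Ω φ < ⊤

/-- `f ∈ W^{s,p}_{loc}(ℍⁿ₊)`. -/
def MemWloc0 (n : ℕ) (p s : ℝ) (f : Heis n → ℝ) : Prop :=
  Measurable f ∧ ∀ K : Set (Heis n), IsCompact K → K ⊆ halfSpace n →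
    (∫⁻ ξ in K, ENNReal.ofReal (|f ξ| ^ p)) < ⊤ ∧ gagSem0 p s K f < ⊤

/-- `f ∈ L^{p-1}_{sp}(ℍⁿ)`. -/
def MemLsp0 (n : ℕ) (p s : ℝ) (f : Heis n → ℝ) : Prop :=
  Measurable f ∧
  (∀ K : Set (Heis n), IsCompact K →
    (∫⁻ ξ in K, ENNReal.ofReal (|f ξ| ^ (p - 1))) < ⊤) ∧
  (∫⁻ ξ, ENNReal.ofReal (|f ξ| ^ (p - 1) / (1 + hd ξ) ^ (hQ n + s * p))) < ⊤

/-- Surface measure of the unit sphere `S^{m-1} ⊂ ℝ^m`: `|S^{m-1}| = 2π^{m/2}/Γ(m/2)`. -/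
def sphereArea (m : ℕ) : ℝ := 2 * Real.pi ^ ((m : ℝ) / 2) / Real.Gamma ((m : ℝ) / 2)

/-- `ℐ(k,θ,α) = (∫₀^∞ (1+t²)^{-(k+2+θ)/4} dt) (∫₀^∞ r^{k-2}(1+r²)^{-(k+θ+α)/2} dr)`. -/
def calI (k : ℕ) (θ α : ℝ) : ℝ :=
  (∫ t in Set.Ioi (0 : ℝ), (1 + t ^ 2) ^ (-(((k : ℝ) + 2 + θ) / 4))) *
  (∫ r in Set.Ioi (0 : ℝ), r ^ ((k : ℝ) - 2) * (1 + r ^ 2) ^ (-(((k : ℝ) + θ + α) / 2)))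

/-- `Λ_{s,p,α} = 2∫₀¹ |1-τ^{(sp+α-1)/p}|^p/(1-τ)^{1+sp+α} dτ + 2/(sp+α)`. -/
def LamC (s p α : ℝ) : ℝ :=
  2 * (∫ τ in Set.Ioo (0 : ℝ) 1,
      |1 - τ ^ ((s * p + α - 1) / p)| ^ p / (1 - τ) ^ (1 + s * p + α)) + 2 / (s * p + α)

/-- `u_β(τ) = τ^β` for `τ > 0`, extended by `0`. -/
def ubeta (β τ : ℝ) : ℝ := if 0 < τ then τ ^ β else 0

/-- `λ(β,s,p)`. -/
def lam (p s β : ℝ) : ℝ :=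
  2 * (∫ τ in Set.Ioo (0 : ℝ) 1,
      Jp p (1 - τ ^ β) * (1 - τ ^ (s * p - 1 - β * (p - 1))) / (1 - τ) ^ (1 + s * p)) +
  2 / (s * p)

/-- `λ_ε(β,s,p)`. -/
def lamEps (p s β ε : ℝ) : ℝ :=
  2 * (∫ τ in Set.Ioo (0 : ℝ) (1 / (1 + ε)), Jp p (1 - τ ^ β) / |1 - τ| ^ (1 + s * p)) +
  2 * (∫ τ in Set.Ioi (1 + ε), Jp p (1 - τ ^ β) / |1 - τ| ^ (1 + s * p)) +
  2 / (s * p)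

/-- The box `D_{R₀}`. -/
def boxD (n : ℕ) (R₀ : ℝ) : Set (Heis n) :=
  {ξ | (∀ i, |ξ.1 i| ≤ R₀) ∧ (∀ i, |ξ.2.1 i| ≤ R₀) ∧ |ξ.2.2| ≤ R₀ ^ 2}

/-- The box `D_{R₀,t}`. -/
def boxDt (n : ℕ) (R₀ : ℝ) : Set (Heis n) :=
  {ξ | (∀ i, |ξ.1 i| ≤ R₀) ∧ (∀ i, |ξ.2.1 i| ≤ R₀) ∧ |ξ.2.2| ≤ R₀ ^ 2 + R₀}

/-! ### Geometry of the gauge -/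

lemma continuous_zsq {n : ℕ} : Continuous (zsq : Heis n → ℝ) := by
  unfold zsq; fun_prop

lemma zsq_nonneg {n : ℕ} (a : Heis n) : 0 ≤ zsq a := by
  unfold zsq; positivity

lemma continuous_hd {n : ℕ} : Continuous (hd : Heis n → ℝ) := by
  unfold hd
  refine Continuous.rpow_const ?_ (fun _ => Or.inr (by norm_num))
  have := @continuous_zsq n
  fun_prop

lemma measurable_hd {n : ℕ} : Measurable (hd : Heis n → ℝ) := continuous_hd.measurable

lemma continuous_x1 {n : ℕ} : Continuous (x1 : Heis n → ℝ) := by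
  unfold x1
  split_ifs <;> fun_prop

lemma measurable_x1 {n : ℕ} : Measurable (x1 : Heis n → ℝ) := continuous_x1.measurable

lemma hd_nonneg {n : ℕ} (a : Heis n) : 0 ≤ hd a := by
  unfold hd; positivity

lemma hd_pow_four {n : ℕ} (a : Heis n) : hd a ^ 4 = zsq a ^ 2 + a.2.2 ^ 2 := by
  unfold hd
  rw [← Real.rpow_natCast, ← Real.rpow_mul (by positivity)]
  norm_num

lemma zsq_le_hd_sq {n : ℕ} (a : Heis n) : zsq a ≤ hd a ^ 2 := by
  refine le_of_sq_le_sq ?_ (by positivity)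
  rw [← pow_mul, hd_pow_four]
  nlinarith [sq_nonneg a.2.2]
where
  le_of_sq_le_sq {a b : ℝ} (h : a ^ 2 ≤ b ^ 2) (hb : 0 ≤ b) : a ≤ b := abs_le_of_sq_le_sq' h hb |>.2

lemma abs_t_le_hd_sq {n : ℕ} (a : Heis n) : |a.2.2| ≤ hd a ^ 2 := by
  refine abs_le_of_sq_le_sq ?_ (by positivity)
  rw [← pow_mul, hd_pow_four]
  nlinarith [sq_nonneg (zsq a)]

lemma abs_x_le_hd {n : ℕ} (a : Heis n) (i : Fin n) : |a.1 i| ≤ hd a := by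
  refine abs_le_of_sq_le_sq (le_trans ?_ (zsq_le_hd_sq a)) (hd_nonneg a)
  have h1 := Finset.single_le_sum (f := fun i => (a.1 i) ^ 2) (fun i _ => sq_nonneg _)
    (Finset.mem_univ i)
  have h2 : 0 ≤ ∑ i, (a.2.1 i) ^ 2 := by positivity
  unfold zsq
  linarith

lemma abs_y_le_hd {n : ℕ} (a : Heis n) (i : Fin n) : |a.2.1 i| ≤ hd a := by
  refine abs_le_of_sq_le_sq (le_trans ?_ (zsq_le_hd_sq a)) (hd_nonneg a)
  have h1 := Finset.single_le_sum (f := fun i => (a.2.1 i) ^ 2) (fun i _ => sq_nonneg _)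
    (Finset.mem_univ i)
  have h2 : 0 ≤ ∑ i, (a.1 i) ^ 2 := by positivity
  unfold zsq
  linarith

lemma abs_x1_le_hd {n : ℕ} (a : Heis n) : |x1 a| ≤ hd a := by
  unfold x1
  split_ifs with h
  · exact abs_x_le_hd a _
  · simpa using hd_nonneg a

lemma hd_neg {n : ℕ} (a : Heis n) : hd (Hinv a) = hd a := by
  simp [hd, zsq, Hinv]

lemma Hmul_inv_swap {n : ℕ} (a b : Heis n) : Hmul (Hinv b) a = Hinv (Hmul (Hinv a) b) := by
  refine Prod.ext ?_ (Prod.ext ?_ ?_)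
  · ext i; simp [Hmul, Hinv, sub_eq_add_neg, add_comm]
  · ext i; simp [Hmul, Hinv, sub_eq_add_neg, add_comm]
  · simp only [Hmul, Hinv, Pi.neg_apply, neg_mul, Finset.sum_neg_distrib]
    have h1 : ∑ i, b.2.1 i * a.1 i = ∑ i, a.1 i * b.2.1 i :=
      Finset.sum_congr rfl fun i _ => mul_comm _ _
    have h2 : ∑ i, a.2.1 i * b.1 i = ∑ i, b.1 i * a.2.1 i :=
      Finset.sum_congr rfl fun i _ => mul_comm _ _
    rw [h1, h2]; ring

lemma hd_symm {n : ℕ} (a b : Heis n) : hd (Hmul (Hinv b) a) = hd (Hmul (Hinv a) b) := by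
  rw [Hmul_inv_swap, hd_neg]

lemma Hmul_inv_cancel {n : ℕ} (a b : Heis n) : Hmul (Hinv a) (Hmul a b) = b := by
  refine Prod.ext ?_ (Prod.ext ?_ ?_)
  · ext i; simp [Hmul, Hinv]
  · ext i; simp [Hmul, Hinv]
  · simp only [Hmul, Hinv, Pi.neg_apply, neg_mul, Finset.sum_neg_distrib, Pi.add_apply, mul_add,
      Finset.sum_add_distrib]
    have h1 : ∑ i, a.2.1 i * a.1 i = ∑ i, a.1 i * a.2.1 i :=
      Finset.sum_congr rfl fun i _ => mul_comm _ _
    rw [h1]; ring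

lemma x1_Hmul {n : ℕ} (a b : Heis n) : x1 (Hmul a b) = x1 a + x1 b := by
  unfold x1
  split_ifs <;> simp [Hmul]

lemma continuous_Hmul {n : ℕ} : Continuous (fun q : Heis n × Heis n => Hmul q.1 q.2) := by
  unfold Hmul; fun_prop

lemma measurable_Hmul {n : ℕ} : Measurable (fun q : Heis n × Heis n => Hmul q.1 q.2) :=
  continuous_Hmul.measurable

lemma continuous_Hinv {n : ℕ} : Continuous (Hinv : Heis n → Heis n) := by
  unfold Hinv; fun_prop

/-- The parabolic dilation `(x, y, t) ↦ (cx, cy, c²t)` of the Heisenberg group. -/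
def dil {n : ℕ} (c : ℝ) (a : Heis n) : Heis n := (c • a.1, c • a.2.1, c ^ 2 • a.2.2)

lemma measurable_dil {n : ℕ} (c : ℝ) : Measurable (dil c : Heis n → Heis n) := by
  unfold dil; fun_prop

lemma hd_dil {n : ℕ} {c : ℝ} (hc : 0 ≤ c) (a : Heis n) : hd (dil c a) = c * hd a := by
  have : hd (dil c a) ^ 4 = (c * hd a) ^ 4 := by
    rw [mul_pow, hd_pow_four, hd_pow_four]
    simp only [zsq, dil, Pi.smul_apply, smul_eq_mul, mul_pow, ← Finset.mul_sum]
    ring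
  exact (pow_left_inj₀ (hd_nonneg _) (mul_nonneg hc (hd_nonneg a)) (by norm_num)).1 this

lemma x1_dil {n : ℕ} (c : ℝ) (a : Heis n) : x1 (dil c a) = c * x1 a := by
  unfold x1
  split_ifs <;> simp [dil]

/-- Dilations scale Lebesgue measure by the homogeneous dimension. -/
lemma map_dil {n : ℕ} {c : ℝ} (hc : 0 < c) :
    Measure.map (dil c) (volume : Measure (Heis n)) =
      ENNReal.ofReal (c ^ (-hQ n)) • (volume : Measure (Heis n)) := by
  have e : (dil c : Heis n → Heis n) =
      Prod.map (fun x => c • x) (Prod.map (fun y => c • y) (fun t => c ^ 2 • t)) := rfl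
  have hm : ∀ r : ℝ, Measurable (fun y : ℝ => r • y) := fun r => by fun_prop
  have hm' : Measurable (fun y : Fin n → ℝ => c • y) := by fun_prop
  have h1 := Measure.map_addHaar_smul (volume : Measure (Fin n → ℝ)) hc.ne'
  have h2 := Measure.map_addHaar_smul (volume : Measure ℝ) (pow_pos hc 2).ne'
  rw [e, Measure.volume_eq_prod, ← Measure.map_prod_map _ _ hm' (hm'.prodMap (hm _)),
    Measure.volume_eq_prod, ← Measure.map_prod_map _ _ hm' (hm _), h1, h2]
  simp only [Measure.prod_smul_left, Measure.prod_smul_right, smul_smul]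
  congr 1
  rw [← ENNReal.ofReal_mul (by positivity), ← ENNReal.ofReal_mul (by positivity)]
  congr 1
  rw [abs_of_pos (by positivity), abs_of_pos (by positivity), hQ, Real.rpow_neg hc.le]
  simp only [Module.finrank_fintype_fun_eq_card, Fintype.card_fin, Module.finrank_self, pow_one]
  rw [← mul_inv, ← mul_inv]
  congr 1
  rw [show (2 * (n : ℝ) + 2) = ((2 * n + 2 : ℕ) : ℝ) by push_cast; ring, Real.rpow_natCast]
  ring

/-- Left translations are shears, hence preserve Lebesgue measure. -/
lemma mp_Hmul {n : ℕ} (a : Heis n) :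
    MeasurePreserving (Hmul a) (volume : Measure (Heis n)) volume := by
  refine MeasurePreserving.skew_product (f := fun x : Fin n → ℝ => a.1 + x)
    (g := fun (x : Fin n → ℝ) (q : (Fin n → ℝ) × ℝ) => ((a.2.1 + q.1,
      a.2.2 + q.2 + 2 * (∑ i, a.2.1 i * x i) - 2 * (∑ i, a.1 i * q.1 i)) : (Fin n → ℝ) × ℝ))
    (measurePreserving_add_left volume a.1) (by fun_prop) (Eventually.of_forall fun x => ?_)
  refine (MeasurePreserving.skew_product (f := fun y : Fin n → ℝ => a.2.1 + y)
    (g := fun (y : Fin n → ℝ) (t : ℝ) =>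
      a.2.2 + t + 2 * (∑ i, a.2.1 i * x i) - 2 * (∑ i, a.1 i * y i))
    (measurePreserving_add_left volume a.2.1) (by fun_prop)
    (Eventually.of_forall fun y => ?_)).map_eq
  have : (fun t : ℝ => a.2.2 + t + 2 * (∑ i, a.2.1 i * x i) - 2 * (∑ i, a.1 i * y i)) =
      fun t => (a.2.2 + 2 * (∑ i, a.2.1 i * x i) - 2 * (∑ i, a.1 i * y i)) + t := by
    ext t; ring
  rw [this]
  exact (measurePreserving_add_left volume _).map_eq

lemma mp_Hinv {n : ℕ} : MeasurePreserving (Hinv : Heis n → Heis n) volume volume := by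
  have h1 : MeasurePreserving (fun x : Fin n → ℝ => -x) volume volume :=
    Measure.measurePreserving_neg _
  have h2 : MeasurePreserving (fun x : ℝ => -x) volume volume :=
    Measure.measurePreserving_neg _
  exact h1.prod (h1.prod h2)

lemma x1_Hinv {n : ℕ} (a : Heis n) : x1 (Hinv a) = - x1 a := by
  unfold x1
  split_ifs <;> simp [Hinv]

/-- `(1+d)^{-(Q+a)}` is dominated by the product of the one-dimensional functions
`(1+|·|)^{-(1+a/Q)}` (to the power `1` in each of the `2n+1` coordinates). -/
lemma integrable_hd {n : ℕ} {a : ℝ} (ha : 0 < a) :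
    Integrable (fun ξ : Heis n => (1 + hd ξ) ^ (-(hQ n + a))) := by
  have hQ0 : 0 < hQ n := by unfold hQ; positivity
  set b : ℝ := 1 + a / hQ n with hb
  have hb1 : 1 < b := by rw [hb]; linarith [div_pos ha hQ0]
  have i1 : Integrable (fun x : ℝ => (1 + ‖x‖) ^ (-b)) :=
    integrable_one_add_norm (by simpa using hb1)
  have ix : Integrable (fun x : Fin n → ℝ => ∏ i, (1 + ‖x i‖) ^ (-b)) :=
    Integrable.fintype_prod (fun _ => i1)
  have hprod : Integrable (fun ξ : Heis n => (∏ i, (1 + ‖ξ.1 i‖) ^ (-b)) *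
      ((∏ i, (1 + ‖ξ.2.1 i‖) ^ (-b)) * (1 + ‖ξ.2.2‖) ^ (-b))) :=
    ix.mul_prod (ix.mul_prod i1)
  refine hprod.mono' ?_ (Eventually.of_forall fun ξ => ?_)
  · exact ((measurable_hd.const_add 1).pow_const _).aestronglyMeasurable
  have h0 := hd_nonneg ξ
  have hpos : (0 : ℝ) < 1 + hd ξ := by linarith
  rw [Real.norm_of_nonneg (by positivity)]
  have key : ∀ (x : Fin n → ℝ), (∀ i, |x i| ≤ hd ξ) →
      (1 + hd ξ) ^ (-b * n) ≤ ∏ i, (1 + ‖x i‖) ^ (-b) := by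
    intro x hx
    have : (1 + hd ξ) ^ (-b * n) = ∏ _i : Fin n, (1 + hd ξ) ^ (-b) := by
      rw [Finset.prod_const, Finset.card_univ, Fintype.card_fin, Real.rpow_mul hpos.le,
        Real.rpow_natCast]
    rw [this]
    refine Finset.prod_le_prod (fun i _ => by positivity) fun i _ => ?_
    refine Real.rpow_le_rpow_of_nonpos (by positivity) ?_ (by linarith)
    simpa using hx i
  have kt : (1 + hd ξ) ^ (-b * 2) ≤ (1 + ‖ξ.2.2‖) ^ (-b) := by
    rw [mul_comm, Real.rpow_mul hpos.le]
    refine Real.rpow_le_rpow_of_nonpos (by positivity) ?_ (by linarith)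
    have := abs_t_le_hd_sq ξ
    rw [Real.rpow_two, Real.norm_eq_abs]
    nlinarith
  have hsplit : (1 + hd ξ) ^ (-(hQ n + a)) =
      (1 + hd ξ) ^ (-b * n) * ((1 + hd ξ) ^ (-b * n) * (1 + hd ξ) ^ (-b * 2)) := by
    rw [← Real.rpow_add hpos, ← Real.rpow_add hpos]
    congr 1
    have : b * hQ n = hQ n + a := by rw [hb]; field_simp
    rw [← this, hQ]; ring
  rw [hsplit]
  gcongr
  · exact key _ (abs_x_le_hd ξ)
  · exact key _ (abs_y_le_hd ξ)

/-! ### The marginal of the kernel in the first coordinate -/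

/-- The convolution kernel `d(ξ)^{-(Q+q)}`, where `q` plays the role of `sp`. -/
def Kr {n : ℕ} (q : ℝ) (a : Heis n) : ℝ := (hd a ^ (hQ n + q))⁻¹

/-- The push-forward of `d(ξ)^{-(Q+q)} dξ` under `ξ ↦ x₁`; it is not locally finite at `0`. -/
def nu (n : ℕ) (q : ℝ) : Measure ℝ :=
  Measure.map x1 ((volume : Measure (Heis n)).withDensity fun a => ENNReal.ofReal (Kr q a))

lemma Kr_nonneg {n : ℕ} (q : ℝ) (a : Heis n) : 0 ≤ Kr q a :=
  inv_nonneg.2 (Real.rpow_nonneg (hd_nonneg a) _)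

lemma measurable_Kr {n : ℕ} (q : ℝ) : Measurable (Kr q : Heis n → ℝ) :=
  (measurable_hd.pow_const _).inv

lemma Kr_dil {n : ℕ} (q : ℝ) {c : ℝ} (hc : 0 < c) (a : Heis n) :
    Kr q (dil c a) = c ^ (-(hQ n + q)) * Kr q a := by
  unfold Kr
  rw [hd_dil hc.le, Real.mul_rpow hc.le (hd_nonneg a), mul_inv, Real.rpow_neg hc.le]

lemma Kr_Hinv {n : ℕ} (q : ℝ) (a : Heis n) : Kr q (Hinv a) = Kr q a := by
  unfold Kr; rw [hd_neg]

lemma lintegral_nu {n : ℕ} (q : ℝ) {g : ℝ → ℝ≥0∞} (hg : Measurable g) :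
    ∫⁻ σ, g σ ∂(nu n q) = ∫⁻ a : Heis n, ENNReal.ofReal (Kr q a) * g (x1 a) := by
  have hgx : Measurable fun a : Heis n => g (x1 a) := hg.comp measurable_x1
  unfold nu
  rw [lintegral_map hg measurable_x1,
    lintegral_withDensity_eq_lintegral_mul _ (measurable_Kr q).ennreal_ofReal hgx]
  rfl

lemma lintegral_dil {n : ℕ} {c : ℝ} (hc : 0 < c) {f : Heis n → ℝ≥0∞} (hf : Measurable f) :
    ∫⁻ a, f a = ENNReal.ofReal (c ^ hQ n) * ∫⁻ a, f (dil c a) := by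
  rw [← lintegral_map hf (measurable_dil c), map_dil hc, lintegral_smul_measure, smul_eq_mul,
    ← mul_assoc, ← ENNReal.ofReal_mul (by positivity), ← Real.rpow_add hc]
  simp

/-- Homogeneity of degree `-q` of the marginal. -/
lemma lintegral_nu_scale {n : ℕ} (q : ℝ) {c : ℝ} (hc : 0 < c) {g : ℝ → ℝ≥0∞}
    (hg : Measurable g) :
    ∫⁻ σ, g σ ∂(nu n q) = ENNReal.ofReal (c ^ (-q)) * ∫⁻ σ, g (c * σ) ∂(nu n q) := by
  have hg' : Measurable fun σ => g (c * σ) := hg.comp (measurable_const_mul c)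
  have hf : Measurable fun a : Heis n => ENNReal.ofReal (Kr q a) * g (x1 a) :=
    (measurable_Kr q).ennreal_ofReal.mul (hg.comp measurable_x1)
  rw [lintegral_nu q hg, lintegral_nu q hg', lintegral_dil hc hf]
  simp_rw [Kr_dil q hc, x1_dil, ENNReal.ofReal_mul (Real.rpow_nonneg hc.le _), mul_assoc]
  have hf' : Measurable fun a : Heis n => ENNReal.ofReal (Kr q a) * g (c * x1 a) :=
    (measurable_Kr q).ennreal_ofReal.mul (hg'.comp measurable_x1)
  rw [lintegral_const_mul _ hf',
    ← mul_assoc, ← ENNReal.ofReal_mul (by positivity), ← Real.rpow_add hc]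
  congr 3
  ring

/-- Integrating a function of `x₁'/x₁` against the kernel reduces to dimension one. -/
lemma lintegral_kernel {n : ℕ} (q : ℝ) {ξ : Heis n} (hξ : 0 < x1 ξ) {g : ℝ → ℝ≥0∞}
    (hg : Measurable g) :
    ∫⁻ ξ', ENNReal.ofReal (Kr q (Hmul (Hinv ξ) ξ')) * g (x1 ξ' / x1 ξ) =
      ENNReal.ofReal (x1 ξ ^ (-q)) * ∫⁻ σ, g (1 + σ) ∂(nu n q) := by
  have hm : Measurable fun ξ' : Heis n =>
      ENNReal.ofReal (Kr q (Hmul (Hinv ξ) ξ')) * g (x1 ξ' / x1 ξ) :=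
    ((measurable_Kr q).comp (measurable_Hmul.comp (measurable_const.prodMk measurable_id))
      ).ennreal_ofReal.mul (hg.comp (measurable_x1.div_const _))
  have hg1 : Measurable fun σ => g (1 + σ / x1 ξ) :=
    hg.comp ((measurable_id.div_const _).const_add 1)
  rw [← (mp_Hmul ξ).lintegral_comp hm]
  simp_rw [Hmul_inv_cancel, x1_Hmul, add_div, div_self hξ.ne']
  rw [← lintegral_nu q hg1, lintegral_nu_scale q hξ hg1]
  simp_rw [mul_div_cancel_left₀ _ hξ.ne']

lemma nu_Ici {n : ℕ} (q : ℝ) {r : ℝ} (hr : 0 < r) :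
    nu n q (Set.Ici r) = ENNReal.ofReal (r ^ (-q)) * nu n q (Set.Ici 1) := by
  have h := lintegral_nu_scale (n := n) q hr
    (g := (Set.Ici r).indicator 1) (measurable_one.indicator measurableSet_Ici)
  have e : (fun σ => (Set.Ici r).indicator (1 : ℝ → ℝ≥0∞) (r * σ)) = (Set.Ici 1).indicator 1 := by
    ext σ
    have : r * σ ∈ Set.Ici r ↔ σ ∈ Set.Ici (1 : ℝ) := by
      simp only [Set.mem_Ici]
      exact le_mul_iff_one_le_right hr
    by_cases hσ : σ ∈ Set.Ici (1 : ℝ)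
    · rw [Set.indicator_of_mem hσ, Set.indicator_of_mem (this.2 hσ)]; rfl
    · rw [Set.indicator_of_notMem hσ, Set.indicator_of_notMem (fun h => hσ (this.1 h))]
  rwa [e, lintegral_indicator_one measurableSet_Ici, lintegral_indicator_one measurableSet_Ici]
    at h

lemma nu_Ici_one_lt_top {n : ℕ} {q : ℝ} (hq : 0 < q) : nu n q (Set.Ici 1) < ⊤ := by
  rw [← lintegral_indicator_one measurableSet_Ici,
    lintegral_nu q (measurable_one.indicator measurableSet_Ici)]
  have hQ0 : 0 < hQ n := by unfold hQ; positivity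
  have hi := ((integrable_hd (n := n) hq).const_mul (2 ^ (hQ n + q))).lintegral_lt_top
  refine lt_of_le_of_lt (lintegral_mono fun a => ?_) hi
  by_cases ha : x1 a ∈ Set.Ici (1 : ℝ)
  · rw [Set.indicator_of_mem ha, Pi.one_apply, mul_one]
    refine ENNReal.ofReal_le_ofReal ?_
    have h1 : 1 ≤ hd a := le_trans ha ((le_abs_self _).trans (abs_x1_le_hd a))
    have : (1 + hd a) ^ (hQ n + q) ≤ 2 ^ (hQ n + q) * hd a ^ (hQ n + q) := by
      rw [← Real.mul_rpow (by norm_num) (by linarith)]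
      exact Real.rpow_le_rpow (by linarith) (by linarith) (by linarith)
    rw [Kr, Real.rpow_neg (by linarith), ← div_eq_mul_inv, inv_eq_one_div,
      div_le_div_iff₀ (Real.rpow_pos_of_pos (by linarith) _)
        (Real.rpow_pos_of_pos (by linarith) _)]
    linarith
  · rw [Set.indicator_of_notMem ha]; simp

lemma nu_neg {n : ℕ} (q : ℝ) : Measure.map (fun σ => -σ) (nu n q) = nu n q := by
  refine Measure.ext_of_lintegral _ fun g hg => ?_
  have hgn : Measurable fun σ => g (-σ) := hg.comp measurable_neg
  have hf : Measurable fun a : Heis n => ENNReal.ofReal (Kr q a) * g (x1 a) :=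
    (measurable_Kr q).ennreal_ofReal.mul (hg.comp measurable_x1)
  rw [lintegral_map hg measurable_neg, lintegral_nu q hgn, lintegral_nu q hg,
    ← mp_Hinv.lintegral_comp hf]
  simp only [Kr_Hinv, x1_Hinv]

lemma volume_x1_eq_zero {n : ℕ} (hn : 1 ≤ n) : (volume : Measure (Heis n)) {a | x1 a = 0} = 0 := by
  let L : Heis n →ₗ[ℝ] ℝ :=
    (LinearMap.proj (⟨0, hn⟩ : Fin n)).comp (LinearMap.fst ℝ (Fin n → ℝ) ((Fin n → ℝ) × ℝ))
  have hL : ∀ a, x1 a = L a := fun a => by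
    have : 0 < n := hn
    simp [x1, L, this]
  have : (volume : Measure ((Fin n → ℝ) × ℝ)).IsAddHaarMeasure :=
    Measure.prod.instIsAddHaarMeasure _ _
  have : (volume : Measure (Heis n)).IsAddHaarMeasure :=
    Measure.prod.instIsAddHaarMeasure _ _
  have := Measure.addHaar_submodule (volume : Measure (Heis n)) (LinearMap.ker L) (by
    intro h
    have h1 : ((fun _ => 1, 0, 0) : Heis n) ∈ LinearMap.ker L := h ▸ Submodule.mem_top
    simp [L] at h1)
  convert this using 2
  ext a
  simp [hL]

lemma nu_zero {n : ℕ} (hn : 1 ≤ n) (q : ℝ) : nu n q {0} = 0 := by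
  unfold nu
  rw [Measure.map_apply measurable_x1 (measurableSet_singleton 0)]
  exact withDensity_absolutelyContinuous _ _ (volume_x1_eq_zero hn)

/-- The homogeneous measure `|σ|^{-1-q} dσ` on the line. -/
def powMeas (q : ℝ) : Measure ℝ :=
  (volume : Measure ℝ).withDensity fun σ => ENNReal.ofReal (|σ| ^ (-1 - q))

lemma measurable_abs_rpow (e : ℝ) : Measurable fun σ : ℝ => |σ| ^ e := by fun_prop

lemma powMeas_Ici {q : ℝ} (hq : 0 < q) {r : ℝ} (hr : 0 < r) :
    powMeas q (Set.Ici r) = ENNReal.ofReal (r ^ (-q) / q) := by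
  unfold powMeas
  rw [withDensity_apply _ measurableSet_Ici, ← restrict_Ioi_eq_restrict_Ici]
  have hi := integrableOn_Ioi_rpow_of_lt (show -1 - q < -1 by linarith) hr
  have : ∫⁻ σ in Set.Ioi r, ENNReal.ofReal (|σ| ^ (-1 - q)) =
      ∫⁻ σ in Set.Ioi r, ENNReal.ofReal (σ ^ (-1 - q)) :=
    setLIntegral_congr_fun measurableSet_Ioi fun σ hσ => by
      rw [abs_of_pos (hr.trans hσ)]
  rw [this, ← ofReal_integral_eq_lintegral_ofReal hi
    ((ae_restrict_iff' measurableSet_Ioi).2 (Eventually.of_forall fun σ hσ =>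
      Real.rpow_nonneg (hr.trans hσ).le _)), integral_Ioi_rpow_of_lt (by linarith) hr]
  congr 1
  rw [show -1 - q + 1 = -q by ring, neg_div_neg_eq]

lemma powMeas_neg (q : ℝ) : Measure.map (fun σ => -σ) (powMeas q) = powMeas q := by
  refine Measure.ext_of_lintegral _ fun g hg => ?_
  have hd' := (measurable_abs_rpow (-1 - q)).ennreal_ofReal
  unfold powMeas
  have hgn : Measurable fun σ => g (-σ) := hg.comp measurable_neg
  rw [lintegral_map hg measurable_neg,
    lintegral_withDensity_eq_lintegral_mul _ hd' hgn,
    lintegral_withDensity_eq_lintegral_mul _ hd' hg,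
    ← (Measure.measurePreserving_neg (volume : Measure ℝ)).lintegral_comp (hd'.mul hg)]
  simp [Pi.mul_apply, abs_neg]

/-- The total one-dimensional constant relating `nu` and `|σ|^{-1-q} dσ`. -/
def kap (n : ℕ) (q : ℝ) : ℝ := q * (nu n q (Set.Ici 1)).toReal

lemma kap_nonneg {n : ℕ} {q : ℝ} (hq : 0 < q) : 0 ≤ kap n q :=
  mul_nonneg hq.le ENNReal.toReal_nonneg

lemma nu_restrict_Ioi {n : ℕ} {q : ℝ} (hq : 0 < q) :
    (nu n q).restrict (Set.Ioi 0) =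
      (ENNReal.ofReal (kap n q) • powMeas q).restrict (Set.Ioi 0) := by
  have hU : (⋃ k : ℕ, Set.Ici (1 / ((k : ℝ) + 1))) = Set.Ioi (0 : ℝ) := by
    ext σ
    simp only [Set.mem_iUnion, Set.mem_Ici, Set.mem_Ioi]
    constructor
    · rintro ⟨k, hk⟩
      exact lt_of_lt_of_le (by positivity) hk
    · intro h
      obtain ⟨k, hk⟩ := exists_nat_one_div_lt h
      exact ⟨k, hk.le⟩
  have hfin : ∀ r : ℝ, 0 < r → nu n q (Set.Ici r) < ⊤ := fun r hr => by
    rw [nu_Ici q hr]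
    exact ENNReal.mul_lt_top ENNReal.ofReal_lt_top (nu_Ici_one_lt_top hq)
  have heq : ∀ r : ℝ, 0 < r →
      nu n q (Set.Ici r) = (ENNReal.ofReal (kap n q) • powMeas q) (Set.Ici r) := fun r hr => by
    rw [nu_Ici q hr, Measure.smul_apply, powMeas_Ici hq hr, smul_eq_mul,
      ← ENNReal.ofReal_mul (kap_nonneg hq),
      ← ENNReal.ofReal_toReal (nu_Ici_one_lt_top (n := n) hq).ne,
      ← ENNReal.ofReal_mul (by positivity), kap]
    congr 1
    field_simp
  rw [← hU, Measure.restrict_iUnion_congr]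
  intro k
  have hk : (0 : ℝ) < 1 / ((k : ℝ) + 1) := by positivity
  have : IsFiniteMeasure ((nu n q).restrict (Set.Ici (1 / ((k : ℝ) + 1)))) :=
    ⟨by rw [Measure.restrict_apply_univ]; exact hfin _ hk⟩
  refine Measure.ext_of_Ici _ _ fun a => ?_
  rw [Measure.restrict_apply measurableSet_Ici, Measure.restrict_apply measurableSet_Ici,
    Set.Ici_inter_Ici]
  exact heq _ (lt_sup_of_lt_right hk)

lemma lintegral_even_split {μ : Measure ℝ} (h1 : Measure.map (fun σ => -σ) μ = μ)
    (h2 : μ {0} = 0) {g : ℝ → ℝ≥0∞} (hg : Measurable g) :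
    ∫⁻ σ, g σ ∂μ = ∫⁻ σ in Set.Ioi 0, g σ ∂μ + ∫⁻ σ in Set.Ioi 0, g (-σ) ∂μ := by
  have e : ∫⁻ σ in Set.Iio 0, g σ ∂μ = ∫⁻ σ in Set.Ioi 0, g (-σ) ∂μ := by
    conv_lhs => rw [← h1]
    rw [setLIntegral_map measurableSet_Iio hg measurable_neg]
    congr 2
    ext σ; simp
  have h3 : ∫⁻ σ, g σ ∂μ = ∫⁻ σ in Set.Ici 0, g σ ∂μ + ∫⁻ σ in Set.Iio 0, g σ ∂μ := by
    rw [← lintegral_add_compl g (measurableSet_Ici (a := (0 : ℝ))), Set.compl_Ici]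
  have h4 : μ.restrict (Set.Ici 0) = μ.restrict (Set.Ioi 0) :=
    Measure.restrict_congr_set (Ioi_ae_eq_Ici' h2).symm
  rw [h3, h4, e]

/-- The marginal is a multiple of `|σ|^{-1-q} dσ`: a measure on the line that is even,
homogeneous of degree `-q` and does not charge `0` is determined by its value on `[1, ∞)`. -/
lemma nu_eq {n : ℕ} (hn : 1 ≤ n) {q : ℝ} (hq : 0 < q) :
    nu n q = ENNReal.ofReal (kap n q) • powMeas q := by
  have hp := nu_restrict_Ioi (n := n) hq
  have hz : (ENNReal.ofReal (kap n q) • powMeas q) {0} = 0 := by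
    rw [Measure.smul_apply]
    have : powMeas q {0} = 0 := withDensity_absolutelyContinuous _ _ (by simp)
    rw [this, smul_zero]
  have hs : Measure.map (fun σ => -σ) (ENNReal.ofReal (kap n q) • powMeas q) =
      ENNReal.ofReal (kap n q) • powMeas q := by
    rw [Measure.map_smul, powMeas_neg]
  refine Measure.ext_of_lintegral _ fun g hg => ?_
  rw [lintegral_even_split (nu_neg q) (nu_zero hn q) hg,
    lintegral_even_split hs hz hg, hp]

/-! ### One-dimensional estimates -/

lemma lintegral_nu_lt_top {n : ℕ} (hn : 1 ≤ n) {q : ℝ} (hq : 0 < q) {g : ℝ → ℝ≥0∞}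
    (h : ∫⁻ σ, g σ ∂(powMeas q) < ⊤) : ∫⁻ σ, g σ ∂(nu n q) < ⊤ := by
  rw [nu_eq hn hq, lintegral_smul_measure, smul_eq_mul]
  exact ENNReal.mul_lt_top ENNReal.ofReal_lt_top h

lemma powMeas_zero (q : ℝ) : powMeas q {0} = 0 :=
  withDensity_absolutelyContinuous _ _ (by simp)

lemma lintegral_powMeas_abs_lt_top {q : ℝ} {g : ℝ → ℝ} (hg : Measurable g)
    (hi : IntegrableOn (fun σ => σ ^ (-1 - q) * g σ) (Set.Ioi 0)) :
    ∫⁻ σ, ENNReal.ofReal (g |σ|) ∂(powMeas q) < ⊤ := by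
  have hga : Measurable fun σ : ℝ => ENNReal.ofReal (g |σ|) :=
    (hg.comp measurable_norm).ennreal_ofReal
  have h : ∫⁻ σ in Set.Ioi 0, ENNReal.ofReal (g |σ|) ∂(powMeas q) < ⊤ := by
    unfold powMeas
    rw [setLIntegral_withDensity_eq_setLIntegral_mul _
      (measurable_abs_rpow (-1 - q)).ennreal_ofReal hga measurableSet_Ioi]
    refine lt_of_le_of_lt ?_ hi.lintegral_lt_top
    refine setLIntegral_mono' measurableSet_Ioi fun σ hσ => ?_
    rw [Pi.mul_apply, abs_of_pos (show (0 : ℝ) < σ from hσ),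
      ENNReal.ofReal_mul (Real.rpow_nonneg (le_of_lt hσ) _)]
  rw [lintegral_even_split (powMeas_neg q) (powMeas_zero q) hga]
  simp only [abs_neg]
  exact ENNReal.add_lt_top.2 ⟨h, h⟩

lemma lintegral_powMeas_near {p s : ℝ} (hp : 1 < p) (hs1 : s < 1)
    (M : ℝ) :
    ∫⁻ σ, ENNReal.ofReal ((Set.Iic M).indicator (fun σ => σ ^ p) |σ|) ∂(powMeas (s * p)) < ⊤ := by
  refine lintegral_powMeas_abs_lt_top
    ((Measurable.pow_const measurable_id p).indicator measurableSet_Iic) ?_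
  have h1 : IntegrableOn (fun σ : ℝ => σ ^ (-1 - s * p + p)) (Set.Ioc 0 (max M 0)) := by
    rw [← intervalIntegrable_iff_integrableOn_Ioc_of_le (le_max_right _ _)]
    exact intervalIntegral.intervalIntegrable_rpow' (by nlinarith)
  have h2 : IntegrableOn ((Set.Ioc 0 (max M 0)).indicator
      fun σ : ℝ => σ ^ (-1 - s * p + p)) (Set.Ioi 0) :=
    (h1.integrable_indicator measurableSet_Ioc).integrableOn
  refine h2.congr_fun (fun σ hσ => ?_) measurableSet_Ioi
  have h0 : (0 : ℝ) < σ := hσ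
  by_cases hM : σ ≤ M
  · rw [Set.indicator_of_mem (show σ ∈ Set.Ioc 0 (max M 0) from ⟨h0, hM.trans (le_max_left _ _)⟩)]
    rw [Set.indicator_of_mem (show σ ∈ Set.Iic M from hM), Real.rpow_add h0]
  · have : σ ∉ Set.Ioc 0 (max M 0) := fun h => by
      rcases le_max_iff.1 h.2 with h | h
      · exact hM h
      · linarith
    rw [Set.indicator_of_notMem this]
    rw [Set.indicator_of_notMem (show σ ∉ Set.Iic M from hM), mul_zero]

lemma lintegral_powMeas_far {p s : ℝ} (hs : 0 < s) {δ : ℝ} (hδ : 0 < δ) :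
    ∫⁻ σ, ENNReal.ofReal ((Set.Ici δ).indicator (fun σ => σ ^ (s * (p - 1))) |σ|)
      ∂(powMeas (s * p)) < ⊤ := by
  refine lintegral_powMeas_abs_lt_top
    ((Measurable.pow_const measurable_id _).indicator measurableSet_Ici) ?_
  have h1 : IntegrableOn (fun σ : ℝ => σ ^ (-1 - s * p + s * (p - 1))) (Set.Ici δ) := by
    rw [integrableOn_Ici_iff_integrableOn_Ioi]
    exact integrableOn_Ioi_rpow_of_lt (by nlinarith) hδ
  have h2 : IntegrableOn ((Set.Ici δ).indicator
      fun σ : ℝ => σ ^ (-1 - s * p + s * (p - 1))) (Set.Ioi 0) :=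
    (h1.integrable_indicator measurableSet_Ici).integrableOn
  refine h2.congr_fun (fun σ hσ => ?_) measurableSet_Ioi
  have h0 : (0 : ℝ) < σ := hσ
  by_cases hM : σ ∈ Set.Ici δ
  · simp only [Set.indicator_of_mem hM]
    rw [Real.rpow_add h0]
  · simp only [Set.indicator_of_notMem hM, mul_zero]

/-- The one-dimensional profile `τ ↦ (τ₊)^s`. -/
def prof (s τ : ℝ) : ℝ := (max τ 0) ^ s

lemma measurable_prof (s : ℝ) : Measurable (prof s) := by
  unfold prof; fun_prop

lemma prof_nonneg (s τ : ℝ) : 0 ≤ prof s τ := Real.rpow_nonneg (le_max_right _ _) _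

lemma prof_of_pos (s : ℝ) {τ : ℝ} (h : 0 < τ) : prof s τ = τ ^ s := by
  rw [prof, max_eq_left h.le]

lemma prof_of_nonpos {s : ℝ} (hs : 0 < s) {τ : ℝ} (h : τ ≤ 0) : prof s τ = 0 := by
  rw [prof, max_eq_right h, Real.zero_rpow hs.ne']

lemma prof_div {s : ℝ} {x : ℝ} (hx : 0 < x) (y : ℝ) :
    prof s y = x ^ s * prof s (y / x) := by
  rw [prof, prof, ← Real.mul_rpow hx.le (le_max_right _ _), mul_max_of_nonneg _ _ hx.le, mul_zero,
    mul_div_cancel₀ _ hx.ne']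

lemma abs_one_sub_prof_le {s : ℝ} (hs : 0 < s) (hs1 : s < 1) (τ : ℝ) :
    |1 - prof s τ| ≤ |1 - τ| := by
  rcases le_or_gt τ 0 with h | h
  · rw [prof_of_nonpos hs h, abs_of_nonneg (by linarith), abs_of_nonneg (by linarith)]; linarith
  rw [prof_of_pos s h]
  rcases le_or_gt τ 1 with h1 | h1
  · have h2 : τ ^ s ≤ 1 := Real.rpow_le_one h.le h1 hs.le
    have h3 : τ ≤ τ ^ s := by
      simpa using Real.rpow_le_rpow_of_exponent_ge h h1 hs1.le
    rw [abs_of_nonneg (by linarith), abs_of_nonneg (by linarith)]; linarith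
  · have h2 : 1 ≤ τ ^ s := Real.one_le_rpow h1.le hs.le
    have h3 : τ ^ s ≤ τ := by
      simpa using Real.rpow_le_rpow_of_exponent_le h1.le hs1.le
    rw [abs_of_nonpos (by linarith), abs_of_nonpos (by linarith)]; linarith

lemma abs_one_sub_prof_le_rpow {s : ℝ} (hs : 0 < s) (hs1 : s < 1) (τ : ℝ) :
    |1 - prof s τ| ≤ |1 - τ| ^ s := by
  rcases le_or_gt τ 0 with h | h
  · rw [prof_of_nonpos hs h, abs_of_nonneg (by linarith), abs_of_nonneg (by linarith)]
    simpa using Real.one_le_rpow (show 1 ≤ 1 - τ by linarith) hs.le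
  rw [prof_of_pos s h]
  rcases le_or_gt τ 1 with h1 | h1
  · have h2 : τ ^ s ≤ 1 := Real.rpow_le_one h.le h1 hs.le
    have h3 := Real.rpow_add_le_add_rpow (show 0 ≤ 1 - τ by linarith) h.le hs.le hs1.le
    rw [abs_of_nonneg (by linarith), abs_of_nonneg (by linarith)]
    simp only [sub_add_cancel, Real.one_rpow] at h3
    linarith
  · have h2 : 1 ≤ τ ^ s := Real.one_le_rpow h1.le hs.le
    have h3 := Real.rpow_add_le_add_rpow (show 0 ≤ τ - 1 by linarith) zero_le_one hs.le hs1.le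
    rw [abs_of_nonpos (by linarith), abs_of_nonpos (by linarith)]
    simp only [sub_add_cancel, Real.one_rpow] at h3
    rw [show -(1 - τ) = τ - 1 by ring]
    linarith

lemma measurable_Jp (p : ℝ) : Measurable (Jp p) := by
  unfold Jp; fun_prop

lemma Jp_neg (p t : ℝ) : Jp p (-t) = - Jp p t := by
  unfold Jp; rw [abs_neg]; ring

lemma Jp_zero (p : ℝ) : Jp p 0 = 0 := by simp [Jp]

lemma Jp_of_nonneg {p t : ℝ} (hp : 1 < p) (ht : 0 ≤ t) : Jp p t = t ^ (p - 1) := by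
  rcases ht.eq_or_lt with rfl | h
  · rw [Jp_zero, Real.zero_rpow (by linarith)]
  · rw [Jp, abs_of_pos h]
    nth_rewrite 2 [← Real.rpow_one t]
    rw [← Real.rpow_add h]; congr 1; ring

lemma abs_Jp {p : ℝ} (hp : 1 < p) (t : ℝ) : |Jp p t| = |t| ^ (p - 1) := by
  have : |Jp p t| = Jp p |t| := by
    rw [Jp, Jp, abs_mul, abs_abs, abs_of_nonneg (Real.rpow_nonneg (abs_nonneg t) _)]
  rw [this, Jp_of_nonneg hp (abs_nonneg t)]

lemma Jp_mul {p c : ℝ} (hp : 1 < p) (hc : 0 < c) (t : ℝ) :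
    Jp p (c * t) = c ^ (p - 1) * Jp p t := by
  rw [← Jp_of_nonneg hp hc.le]
  simp only [Jp, abs_mul, Real.mul_rpow (abs_nonneg c) (abs_nonneg t)]
  ring

/-- For `0 < a < 1`, the complement of the multiplicative neighbourhood `[a, 1/a]` of `1`. -/
def farSet (a : ℝ) : Set ℝ := {τ | τ < a ∨ 1 < a * τ}

lemma measurableSet_farSet (a : ℝ) : MeasurableSet (farSet a) :=
  (measurableSet_lt measurable_id measurable_const).union
    (measurableSet_lt measurable_const (measurable_const_mul a))

lemma farSet_dist {a : ℝ} (ha : 0 < a) (ha1 : a < 1) {τ : ℝ} (h : τ ∈ farSet a) :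
    1 - a ≤ |1 - τ| := by
  rcases h with h | h
  · exact le_trans (by linarith) (le_abs_self _)
  · refine le_trans ?_ (neg_le_abs _)
    nlinarith [mul_pos ha (sub_pos.2 ha1)]

/-- The truncated one-dimensional integrand `1_{far}(τ) J_p(1 - τ₊^s)`. -/
def trunc (p s a τ : ℝ) : ℝ := (farSet a).indicator (fun τ => Jp p (1 - prof s τ)) τ

lemma measurable_trunc (p s a : ℝ) : Measurable (trunc p s a) :=
  ((measurable_Jp p).comp ((measurable_prof s).const_sub 1)).indicator (measurableSet_farSet a)

lemma lintegral_trunc_lt_top {p s a : ℝ} (hp : 1 < p) (hs : 0 < s)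
    (hs1 : s < 1) (ha : 0 < a) (ha1 : a < 1) :
    ∫⁻ σ, ENNReal.ofReal |trunc p s a (1 + σ)| ∂(powMeas (s * p)) < ⊤ := by
  refine lt_of_le_of_lt (lintegral_mono fun σ => ENNReal.ofReal_le_ofReal ?_)
    (lintegral_powMeas_far hs (sub_pos.2 ha1))
  unfold trunc
  by_cases h : 1 + σ ∈ farSet a
  · have hd := farSet_dist ha ha1 h
    rw [show 1 - (1 + σ) = -σ by ring, abs_neg] at hd
    rw [Set.indicator_of_mem h, Set.indicator_of_mem (show |σ| ∈ Set.Ici (1 - a) from hd),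
      abs_Jp hp, Real.rpow_mul (abs_nonneg _)]
    have := abs_one_sub_prof_le_rpow hs hs1 (1 + σ)
    rw [show 1 - (1 + σ) = -σ by ring, abs_neg] at this
    exact Real.rpow_le_rpow (abs_nonneg _) this (by linarith)
  · rw [Set.indicator_of_notMem h, abs_zero]
    exact Set.indicator_nonneg (fun x hx => Real.rpow_nonneg (by
      have : 1 - a ≤ x := hx
      linarith) _) _

/-! ### The exact value of the truncated one-dimensional integral -/

/-- An antiderivative, up to the factor `1/(sp)`, of the integrand folded onto `(0,1)`. -/
def prim (p s τ : ℝ) : ℝ := (1 - τ ^ s) ^ p * (1 - τ) ^ (-(s * p))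

/-- The derivative of `prim`, divided by `sp`. -/
def primDer (p s τ : ℝ) : ℝ :=
  (1 - τ ^ s) ^ (p - 1) * (1 - τ ^ (s - 1)) * (1 - τ) ^ (-1 - s * p)

lemma hasDerivAt_prim {p s τ : ℝ} (hs : 0 < s) (h0 : 0 < τ) (h1 : τ < 1) :
    HasDerivAt (prim p s) (s * p * primDer p s τ) τ := by
  have hτs : 0 < 1 - τ ^ s := sub_pos.2 (Real.rpow_lt_one h0.le h1 hs)
  have hτ1 : 0 < 1 - τ := sub_pos.2 h1
  have d1 : HasDerivAt (fun τ : ℝ => 1 - τ ^ s) (-(s * τ ^ (s - 1))) τ := by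
    simpa using (Real.hasDerivAt_rpow_const (x := τ) (p := s) (Or.inl h0.ne')).const_sub 1
  have d2 : HasDerivAt (fun τ : ℝ => 1 - τ) (-1) τ := by
    simpa using (hasDerivAt_id τ).const_sub 1
  have := (d1.rpow_const (p := p) (Or.inl hτs.ne')).mul
    (d2.rpow_const (p := -(s * p)) (Or.inl hτ1.ne'))
  refine this.congr_deriv ?_
  have e1 : (1 - τ ^ s) ^ p = (1 - τ ^ s) ^ (p - 1) * (1 - τ ^ s) := by
    rw [← Real.rpow_add_one hτs.ne']; simp
  have e2 : (1 - τ) ^ (-(s * p)) = (1 - τ) ^ (-1 - s * p) * (1 - τ) := by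
    rw [← Real.rpow_add_one hτ1.ne']; congr 1; ring
  have e3 : τ ^ s = τ ^ (s - 1) * τ := by
    rw [← Real.rpow_add_one h0.ne']; simp
  rw [show -(s * p) - 1 = -1 - s * p by ring, e1, e2, primDer]
  generalize (1 - τ ^ s) ^ (p - 1) = A
  generalize (1 - τ) ^ (-1 - s * p) = B
  rw [e3]
  ring

lemma continuousOn_prim {p s a : ℝ} (hp : 0 < p) (hs : 0 < s) (ha1 : a < 1) :
    ContinuousOn (prim p s) (Set.Icc 0 a) := by
  unfold prim
  refine ContinuousOn.mul ?_ ?_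
  · refine Continuous.continuousOn ?_
    exact (continuous_const.sub (Real.continuous_rpow_const hs.le)).rpow_const
      (fun _ => Or.inr hp.le)
  · refine ContinuousOn.rpow_const (by fun_prop) fun x hx => Or.inl ?_
    linarith [hx.2]

lemma tendsto_prim {p s : ℝ} (hp : 1 < p) (hs : 0 < s) (hs1 : s < 1) :
    Tendsto (prim p s) (𝓝[<] 1) (𝓝 0) := by
  have h : Tendsto (fun a : ℝ => (1 - a) ^ (p - s * p)) (𝓝[<] 1) (𝓝 0) := by
    have hc : Continuous (fun a : ℝ => (1 - a) ^ (p - s * p)) :=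
      (continuous_const.sub continuous_id).rpow_const fun _ => Or.inr (by nlinarith)
    have := hc.tendsto 1
    rw [sub_self, Real.zero_rpow (by nlinarith)] at this
    exact this.mono_left nhdsWithin_le_nhds
  refine tendsto_of_tendsto_of_tendsto_of_le_of_le' tendsto_const_nhds h ?_ ?_
  all_goals
    filter_upwards [Ioo_mem_nhdsLT (zero_lt_one' ℝ)] with a ha
    have h1 : 0 < 1 - a := sub_pos.2 ha.2
    have h2 : 0 < 1 - a ^ s := sub_pos.2 (Real.rpow_lt_one ha.1.le ha.2 hs)
  · unfold prim; positivity
  · have := abs_one_sub_prof_le hs hs1 a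
    rw [prof_of_pos s ha.1, abs_of_pos h1, abs_of_pos h2] at this
    rw [sub_eq_add_neg p, Real.rpow_add h1]
    unfold prim
    gcongr

lemma powMeas_Iic_neg_one {q : ℝ} (hq : 0 < q) :
    powMeas q (Set.Iic (-1)) = ENNReal.ofReal (1 / q) := by
  rw [← powMeas_neg, Measure.map_apply measurable_neg measurableSet_Iic]
  have : (fun σ : ℝ => -σ) ⁻¹' Set.Iic (-1) = Set.Ici 1 := by ext; simp
  rw [this, powMeas_Ici hq one_pos, Real.one_rpow]

/-- The part of the integrand over `τ < 1` plus the part over `τ > 1`, the latter pulled back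
by `τ ↦ 1/τ`, is the derivative of `prim` up to a constant. -/
lemma fold_eq {p s a x : ℝ} (hp : 1 < p) (hs : 0 < s) (ha : 0 < a) (ha1 : a < 1) (hx : 0 < x) :
    (Set.Iio 1).indicator (fun τ => |τ - 1| ^ (-1 - s * p) * trunc p s a τ) x +
      (|(-1 : ℝ)| * x ^ ((-1 : ℝ) - 1)) • (Set.Ici 1).indicator
        (fun τ => |τ - 1| ^ (-1 - s * p) * trunc p s a τ) (x ^ (-1 : ℝ)) =
      (Set.Ioo 0 a).indicator (primDer p s) x := by
  rw [Real.rpow_neg_one x]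
  by_cases hxa : x < a
  · have hx1 : x < 1 := hxa.trans ha1
    have hxi : 1 < x⁻¹ := (one_lt_inv₀ hx).2 hx1
    have h1 : 0 < 1 - x := sub_pos.2 hx1
    have h2 : 0 < 1 - x ^ s := sub_pos.2 (Real.rpow_lt_one hx.le hx1 hs)
    have m1 : x ∈ farSet a := Or.inl hxa
    have m2 : x⁻¹ ∈ farSet a := Or.inr (by rwa [← div_eq_mul_inv, one_lt_div hx])
    rw [Set.indicator_of_mem (show x ∈ Set.Iio 1 from hx1),
      Set.indicator_of_mem (show x⁻¹ ∈ Set.Ici 1 from hxi.le),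
      Set.indicator_of_mem (show x ∈ Set.Ioo 0 a from ⟨hx, hxa⟩)]
    unfold trunc
    rw [Set.indicator_of_mem m1, Set.indicator_of_mem m2, prof_of_pos s hx,
      prof_of_pos s (inv_pos.2 hx), Jp_of_nonneg hp h2.le]
    have e1 : 1 - x⁻¹ ^ s = -((x ^ s)⁻¹ * (1 - x ^ s)) := by
      rw [Real.inv_rpow hx.le]
      have := (Real.rpow_pos_of_pos hx s).ne'
      field_simp
      ring
    have e2 : |x⁻¹ - 1| = x⁻¹ * (1 - x) := by
      rw [abs_of_pos (by linarith)]; field_simp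
    have e3 : |x - 1| = 1 - x := by rw [abs_of_neg (by linarith)]; ring
    rw [e1, Jp_neg, Jp_mul hp (by positivity), Jp_of_nonneg hp h2.le, e2, e3, smul_eq_mul,
      Real.mul_rpow (by positivity) h1.le, primDer]
    have e4 : x ^ (s - 1) =
        x ^ ((-1 : ℝ) - 1) * x⁻¹ ^ (-1 - s * p) * (x ^ s)⁻¹ ^ (p - 1) := by
      rw [← Real.rpow_neg_one x, ← Real.rpow_neg hx.le, ← Real.rpow_mul hx.le,
        ← Real.rpow_mul hx.le, ← Real.rpow_add hx, ← Real.rpow_add hx]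
      congr 1; ring
    rw [e4, abs_neg, abs_one]
    ring
  · have hxa' : a ≤ x := not_lt.1 hxa
    rw [Set.indicator_of_notMem (show x ∉ Set.Ioo 0 a from fun h => hxa h.2)]
    have z1 : (Set.Iio 1).indicator (fun τ => |τ - 1| ^ (-1 - s * p) * trunc p s a τ) x = 0 := by
      by_cases hx1 : x ∈ Set.Iio (1 : ℝ)
      · rw [Set.indicator_of_mem hx1]
        have hx1' : x < 1 := hx1
        have : x ∉ farSet a := by
          rintro (h | h)
          · exact hxa h
          · nlinarith
        rw [trunc, Set.indicator_of_notMem this, mul_zero]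
      · rw [Set.indicator_of_notMem hx1]
    have z2 : (Set.Ici 1).indicator
        (fun τ => |τ - 1| ^ (-1 - s * p) * trunc p s a τ) x⁻¹ = 0 := by
      by_cases hx1 : x⁻¹ ∈ Set.Ici (1 : ℝ)
      · rw [Set.indicator_of_mem hx1]
        have hx1' : 1 ≤ x⁻¹ := hx1
        have : x⁻¹ ∉ farSet a := by
          rintro (h | h)
          · linarith
          · rw [← div_eq_mul_inv, one_lt_div hx] at h
            exact hxa h
        rw [trunc, Set.indicator_of_notMem this, mul_zero]
      · rw [Set.indicator_of_notMem hx1]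
    rw [z1, z2, smul_zero, add_zero]

lemma integrable_trunc {p s a : ℝ} (hp : 1 < p) (hs : 0 < s)
    (hs1 : s < 1) (ha : 0 < a) (ha1 : a < 1) :
    Integrable (fun σ => trunc p s a (1 + σ)) (powMeas (s * p)) := by
  refine ⟨((measurable_trunc p s a).comp (measurable_const_add 1)).aestronglyMeasurable, ?_⟩
  rw [hasFiniteIntegral_iff_norm]
  exact lintegral_trunc_lt_top hp hs hs1 ha ha1

/-- The exact value of the truncated integral. The half-line `τ ≤ 0` contributes `1/(sp)`, and the
folded half-line `τ > 0` contributes `(prim p s a - prim p s 0)/(sp)` with `prim p s 0 = 1`. -/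
lemma integral_trunc {p s a : ℝ} (hp : 1 < p) (hs : 0 < s)
    (hs1 : s < 1) (ha : 0 < a) (ha1 : a < 1) :
    ∫ σ, trunc p s a (1 + σ) ∂(powMeas (s * p)) = prim p s a / (s * p) := by
  have hq : 0 < s * p := by positivity
  have hint := integrable_trunc hp hs hs1 ha ha1
  rw [← integral_add_compl (measurableSet_Iic (a := (-1 : ℝ))) hint, Set.compl_Iic]
  have h1 : ∫ σ in Set.Iic (-1), trunc p s a (1 + σ) ∂(powMeas (s * p)) = 1 / (s * p) := by
    have : ∫ σ in Set.Iic (-1), trunc p s a (1 + σ) ∂(powMeas (s * p)) =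
        ∫ σ in Set.Iic (-1), (1 : ℝ) ∂(powMeas (s * p)) := by
      refine setIntegral_congr_fun measurableSet_Iic fun σ hσ => ?_
      have hσ' : σ ≤ -1 := hσ
      have m : 1 + σ ∈ farSet a := Or.inl (by linarith)
      simp only [trunc]
      rw [Set.indicator_of_mem m, prof_of_nonpos hs (by linarith), sub_zero,
        Jp_of_nonneg hp zero_le_one, Real.one_rpow]
    rw [this, setIntegral_const, Measure.real, powMeas_Iic_neg_one hq,
      ENNReal.toReal_ofReal (by positivity), smul_eq_mul, mul_one]
  set f : ℝ → ℝ := fun τ => |τ - 1| ^ (-1 - s * p) * trunc p s a τ with hf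
  have hdm := (measurable_abs_rpow (-1 - s * p)).ennreal_ofReal
  have hmp := measurePreserving_add_left (volume : Measure ℝ) 1
  have hpre : (fun σ : ℝ => 1 + σ) ⁻¹' Set.Ioi 0 = Set.Ioi (-1) := by
    ext σ; simp only [Set.mem_preimage, Set.mem_Ioi]; constructor <;> intro h <;> linarith
  have hfσ : ∀ σ : ℝ, f (1 + σ) = |σ| ^ (-1 - s * p) * trunc p s a (1 + σ) := fun σ => by
    simp only [hf, add_sub_cancel_left]
  have h2 : ∫ σ in Set.Ioi (-1), trunc p s a (1 + σ) ∂(powMeas (s * p)) =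
      ∫ τ in Set.Ioi 0, f τ := by
    unfold powMeas
    rw [setIntegral_withDensity_eq_setIntegral_toReal_smul hdm
      (Eventually.of_forall fun _ => ENNReal.ofReal_lt_top) _ measurableSet_Ioi,
      ← hmp.setIntegral_preimage_emb (measurableEmbedding_addLeft 1) f (Set.Ioi 0), hpre]
    refine setIntegral_congr_fun measurableSet_Ioi fun σ _ => ?_
    simp only [hfσ]
    rw [ENNReal.toReal_ofReal (by positivity), smul_eq_mul]
  have hif : IntegrableOn f (Set.Ioi 0) := by
    have : Integrable (fun σ => f (1 + σ)) := by
      have h := (integrable_withDensity_iff_integrable_smul₀'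
        hdm.aemeasurable (Eventually.of_forall fun _ => ENNReal.ofReal_lt_top)).1 hint
      refine h.congr (Eventually.of_forall fun σ => ?_)
      simp only [hfσ]
      rw [ENNReal.toReal_ofReal (by positivity), smul_eq_mul]
    exact ((hmp.integrable_comp_emb (g := f) (measurableEmbedding_addLeft 1)).1 this).integrableOn
  have hi1 : IntegrableOn ((Set.Iio 1).indicator f) (Set.Ioi 0) := hif.indicator measurableSet_Iio
  have hi2 : IntegrableOn ((Set.Ici 1).indicator f) (Set.Ioi 0) := hif.indicator measurableSet_Ici
  have hi3 := (integrableOn_Ioi_comp_rpow_iff _ (show (-1 : ℝ) ≠ 0 by norm_num)).2 hi2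
  have h3 : ∫ τ in Set.Ioi 0, f τ = ∫ τ in Set.Ioi 0, (Set.Ioo 0 a).indicator (primDer p s) τ := by
    have e : ∀ τ, f τ = (Set.Iio 1).indicator f τ + (Set.Ici 1).indicator f τ := fun τ => by
      rw [← Set.compl_Iio, ← Pi.add_apply, Set.indicator_self_add_compl]
    rw [integral_congr_ae (Eventually.of_forall e), integral_add hi1 hi2,
      ← integral_comp_rpow_Ioi ((Set.Ici 1).indicator f) (show (-1 : ℝ) ≠ 0 by norm_num), ← integral_add hi1 hi3]
    exact setIntegral_congr_fun measurableSet_Ioi fun x hx => fold_eq hp hs ha ha1 hx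
  have hi4 : IntegrableOn ((Set.Ioo 0 a).indicator (primDer p s)) (Set.Ioi 0) :=
    (hi1.add hi3).congr_fun (fun x hx => fold_eq hp hs ha ha1 hx) measurableSet_Ioi
  have hsub : Set.Ioo 0 a ⊆ Set.Ioi (0 : ℝ) := fun x hx => hx.1
  have hi5 : IntegrableOn (primDer p s) (Set.Ioo 0 a) := by
    have := (integrable_indicator_iff (measurableSet_Ioo (a := (0:ℝ)) (b := a))).1 hi4
    rwa [IntegrableOn, Measure.restrict_restrict measurableSet_Ioo,
      Set.inter_eq_left.2 hsub] at this
  have h4 : ∫ τ in Set.Ioi 0, (Set.Ioo 0 a).indicator (primDer p s) τ =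
      ∫ τ in (0 : ℝ)..a, primDer p s τ := by
    rw [setIntegral_indicator measurableSet_Ioo, Set.inter_eq_right.2 hsub,
      intervalIntegral.integral_of_le ha.le, integral_Ioc_eq_integral_Ioo]
  have hi6 : IntervalIntegrable (fun τ => s * p * primDer p s τ) volume 0 a := by
    refine IntervalIntegrable.const_mul ?_ _
    rwa [intervalIntegrable_iff_integrableOn_Ioo_of_le ha.le]
  have h5 := intervalIntegral.integral_eq_sub_of_hasDerivAt_of_le ha.le
    (continuousOn_prim (p := p) (by linarith) hs ha1)
    (fun x hx => hasDerivAt_prim hs hx.1 (hx.2.trans ha1)) hi6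
  rw [intervalIntegral.integral_const_mul] at h5
  have h6 : prim p s 0 = 1 := by simp [prim, Real.zero_rpow hs.ne']
  rw [h6] at h5
  rw [h1, h2, h3, h4]
  field_simp
  linarith

/-! ### The kernel on pairs of points -/

/-- The singular kernel `d(ξ⁻¹∘ξ')^{-(Q+q)}`. -/
def Kk {n : ℕ} (q : ℝ) (ξ ξ' : Heis n) : ℝ := Kr q (Hmul (Hinv ξ) ξ')

lemma Kk_nonneg {n : ℕ} (q : ℝ) (ξ ξ' : Heis n) : 0 ≤ Kk q ξ ξ' := Kr_nonneg q _

lemma Kk_symm {n : ℕ} (q : ℝ) (ξ ξ' : Heis n) : Kk q ξ' ξ = Kk q ξ ξ' := by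
  simp only [Kk, Kr, hd_symm]

lemma measurable_Kk {n : ℕ} (q : ℝ) : Measurable fun z : Heis n × Heis n => Kk q z.1 z.2 := by
  have h1 : Measurable fun z : Heis n × Heis n => (Hinv z.1, z.2) :=
    (continuous_Hinv.measurable.comp measurable_fst).prodMk measurable_snd
  have h2 : Measurable fun z : Heis n × Heis n => Hmul (Hinv z.1) z.2 := measurable_Hmul.comp h1
  exact (measurable_Kr q).comp h2

lemma measurable_Kk_right {n : ℕ} (q : ℝ) (ξ : Heis n) : Measurable (Kk q ξ) := by
  have h : Measurable fun ξ' : Heis n => Hmul (Hinv ξ) ξ' :=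
    measurable_Hmul.comp (measurable_const.prodMk measurable_id)
  exact (measurable_Kr q).comp h

/-- Bochner-integral form of `lintegral_kernel`. -/
lemma integral_kernel {n : ℕ} (q : ℝ) {ξ : Heis n} (hξ : 0 < x1 ξ) {g : ℝ → ℝ}
    (hg : Measurable g) :
    ∫ ξ', Kk q ξ ξ' * g (x1 ξ' / x1 ξ) =
      x1 ξ ^ (-q) * ∫ σ, g (1 + σ) ∂(nu n q) := by
  have hT : Measurable fun ξ' : Heis n => x1 ξ' / x1 ξ := measurable_x1.div_const _
  have hA : Measurable fun σ : ℝ => 1 + σ := measurable_const_add 1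
  have hK := (measurable_Kk_right q ξ).ennreal_ofReal
  have key : Measure.map (fun ξ' : Heis n => x1 ξ' / x1 ξ)
      ((volume : Measure (Heis n)).withDensity fun ξ' => ENNReal.ofReal (Kk q ξ ξ')) =
      ENNReal.ofReal (x1 ξ ^ (-q)) • Measure.map (fun σ => 1 + σ) (nu n q) := by
    refine Measure.ext_of_lintegral _ fun h hh => ?_
    rw [lintegral_map hh hT, lintegral_withDensity_eq_lintegral_mul _ hK
        (show Measurable fun ξ' : Heis n => h (x1 ξ' / x1 ξ) from hh.comp hT),
      lintegral_smul_measure, lintegral_map hh hA, smul_eq_mul]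
    exact lintegral_kernel q hξ hh
  have e : ∫ τ, g τ ∂_ = ∫ τ, g τ ∂_ := congrArg (fun μ => ∫ τ, g τ ∂μ) key
  rw [integral_smul_measure, integral_map hA.aemeasurable hg.aestronglyMeasurable,
    integral_map hT.aemeasurable hg.aestronglyMeasurable,
    integral_withDensity_eq_integral_toReal_smul hK
      (Eventually.of_forall fun _ => ENNReal.ofReal_lt_top),
    ENNReal.toReal_ofReal (by positivity), smul_eq_mul] at e
  rw [← e]
  refine integral_congr_ae (Eventually.of_forall fun ξ' => ?_)
  simp only [smul_eq_mul]
  rw [ENNReal.toReal_ofReal (Kk_nonneg q ξ _)]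

/-- The `p`-energy density of `δ^s` on multiplicatively comparable points is bounded uniformly
in the base point, by homogeneity. -/
lemma near_bound {n : ℕ} (hn : 1 ≤ n) {p s : ℝ} (hp : 1 < p) (hs : 0 < s) (hs1 : s < 1) (M : ℝ) :
    ∃ C : ℝ≥0∞, C < ⊤ ∧ ∀ ξ : Heis n, 0 < x1 ξ →
      ∫⁻ ξ' in {ξ' : Heis n | |1 - x1 ξ' / x1 ξ| ≤ M},
        ENNReal.ofReal (|prof s (x1 ξ) - prof s (x1 ξ')| ^ p * Kk (s * p) ξ ξ') ≤ C := by
  have hq : 0 < s * p := by positivity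
  have hind : Measurable fun σ : ℝ => (Set.Iic M).indicator (fun σ => σ ^ p) |σ| :=
    ((Measurable.pow_const measurable_id p).indicator measurableSet_Iic).comp measurable_norm
  refine ⟨_, lintegral_nu_lt_top hn hq (lintegral_powMeas_near hp hs1 M), fun ξ hξ => ?_⟩
  have hx : 0 < x1 ξ ^ (s * p) := Real.rpow_pos_of_pos hξ _
  have hS : MeasurableSet {ξ' : Heis n | |1 - x1 ξ' / x1 ξ| ≤ M} :=
    measurableSet_le ((measurable_x1.div_const _).const_sub 1).norm measurable_const
  set g : ℝ → ℝ≥0∞ := fun τ => ENNReal.ofReal (x1 ξ ^ (s * p)) *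
    ENNReal.ofReal ((Set.Iic M).indicator (fun σ => σ ^ p) |τ - 1|) with hg
  have hgm : Measurable g :=
    ((hind.comp (measurable_id.sub_const 1)).ennreal_ofReal).const_mul _
  have e := lintegral_kernel (s * p) hξ hgm
  simp only [hg, add_sub_cancel_left] at e
  rw [lintegral_const_mul _ hind.ennreal_ofReal, ← mul_assoc,
    ← ENNReal.ofReal_mul (by positivity), ← Real.rpow_add hξ, neg_add_cancel, Real.rpow_zero,
    ENNReal.ofReal_one, one_mul] at e
  rw [← e, ← lintegral_indicator hS]
  refine lintegral_mono fun ξ' => ?_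
  by_cases h : ξ' ∈ {ξ' : Heis n | |1 - x1 ξ' / x1 ξ| ≤ M}
  · have h' : |x1 ξ' / x1 ξ - 1| ∈ Set.Iic M := by rw [abs_sub_comm]; exact h
    rw [Set.indicator_of_mem h, Set.indicator_of_mem h', ← ENNReal.ofReal_mul hx.le,
      ← ENNReal.ofReal_mul (Kr_nonneg _ _)]
    refine ENNReal.ofReal_le_ofReal ?_
    rw [mul_comm]
    refine mul_le_mul_of_nonneg_left ?_ (Kr_nonneg _ _)
    rw [prof_div hξ (x1 ξ'), prof_of_pos s hξ, ← mul_one_sub, abs_mul,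
      abs_of_pos (Real.rpow_pos_of_pos hξ s), Real.mul_rpow (by positivity) (abs_nonneg _),
      ← Real.rpow_mul hξ.le, abs_sub_comm (x1 ξ' / x1 ξ)]
    exact mul_le_mul_of_nonneg_left (Real.rpow_le_rpow (abs_nonneg _)
      (abs_one_sub_prof_le hs hs1 _) (by linarith)) hx.le
  · rw [Set.indicator_of_notMem h]; exact bot_le

/-! ### Membership in the function spaces -/

lemma continuous_prof {s : ℝ} (hs : 0 < s) : Continuous (prof s) :=
  (continuous_id.max continuous_const).rpow_const fun _ => Or.inr hs.le

lemma memWloc {n : ℕ} (hn : 1 ≤ n) {p s : ℝ} (hp : 1 < p) (hs : 0 < s) (hs1 : s < 1) :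
    MemWloc0 n p s (fun ξ => prof s (x1 ξ)) := by
  refine ⟨(measurable_prof s).comp measurable_x1, fun K hK hKH => ⟨?_, ?_⟩⟩
  · have hc : Continuous fun ξ : Heis n => |prof s (x1 ξ)| ^ p :=
      (((continuous_prof hs).comp continuous_x1).abs).rpow_const fun _ => Or.inr (by linarith)
    exact (hc.continuousOn.integrableOn_compact hK).lintegral_lt_top
  · have hc : ContinuousOn (fun z : Heis n × Heis n => |1 - x1 z.2 / x1 z.1|) (K ×ˢ K) :=
      (continuousOn_const.sub ((continuous_x1.comp continuous_snd).continuousOn.div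
        (continuous_x1.comp continuous_fst).continuousOn fun z hz => (hKH hz.1).ne')).abs
    obtain ⟨M, hM⟩ := (hK.prod hK).bddAbove_image hc
    obtain ⟨C, hC, hb⟩ := near_bound hn hp hs hs1 M
    unfold gagSem0
    refine lt_of_le_of_lt (b := ∫⁻ _ in K, C) (setLIntegral_mono' hK.measurableSet fun ξ hξ => ?_) ?_
    · refine le_trans ?_ (hb ξ (hKH hξ))
      refine lintegral_mono_set fun ξ' hξ' => ?_
      exact hM ⟨(ξ, ξ'), ⟨hξ, hξ'⟩, rfl⟩
    · rw [setLIntegral_const]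
      exact ENNReal.mul_lt_top hC hK.measure_lt_top

lemma memLsp {n : ℕ} {p s : ℝ} (hp : 1 < p) (hs : 0 < s) :
    MemLsp0 n p s (fun ξ => prof s (x1 ξ)) := by
  refine ⟨(measurable_prof s).comp measurable_x1, fun K hK => ?_, ?_⟩
  · have hc : Continuous fun ξ : Heis n => |prof s (x1 ξ)| ^ (p - 1) :=
      (((continuous_prof hs).comp continuous_x1).abs).rpow_const fun _ => Or.inr (by linarith)
    exact (hc.continuousOn.integrableOn_compact hK).lintegral_lt_top
  · refine lt_of_le_of_lt (lintegral_mono fun ξ => ENNReal.ofReal_le_ofReal ?_)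
      (integrable_hd (n := n) hs).lintegral_lt_top
    have h1 : 0 < 1 + hd ξ := by linarith [hd_nonneg ξ]
    have h2 : max (x1 ξ) 0 ≤ 1 + hd ξ := by
      refine max_le ?_ h1.le
      linarith [le_abs_self (x1 ξ), abs_x1_le_hd ξ]
    have h0 : 0 ≤ max (x1 ξ) 0 := le_max_right _ _
    rw [div_le_iff₀ (Real.rpow_pos_of_pos h1 _), ← Real.rpow_add h1, abs_of_nonneg (prof_nonneg _ _),
      prof, ← Real.rpow_mul h0]
    rw [show -(hQ n + s) + (hQ n + s * p) = s * (p - 1) by ring]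
    exact Real.rpow_le_rpow h0 h2 (mul_nonneg hs.le (by linarith))

/-! ### The truncated double integral -/

/-- The pairs of points whose first coordinates differ by more than the factor `1/a`, phrased
without division so as to be symmetric and meaningful for all signs. It matches `farSet a` when
`x₁ > 0`. -/
def Far (n : ℕ) (a : ℝ) : Set (Heis n × Heis n) :=
  {z | x1 z.2 < a * x1 z.1 ∨ x1 z.1 < a * x1 z.2}

lemma measurableSet_Far (n : ℕ) (a : ℝ) : MeasurableSet (Far n a) :=
  (measurableSet_lt (measurable_x1.comp measurable_snd)
    ((measurable_x1.comp measurable_fst).const_mul a)).union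
    (measurableSet_lt (measurable_x1.comp measurable_fst)
      ((measurable_x1.comp measurable_snd).const_mul a))

/-- The antisymmetric kernel `J_p(δ(ξ)^s - δ(ξ')^s) d(ξ⁻¹∘ξ')^{-(Q+sp)}`. -/
def Tk {n : ℕ} (p s : ℝ) (z : Heis n × Heis n) : ℝ :=
  Jp p (prof s (x1 z.1) - prof s (x1 z.2)) * Kk (s * p) z.1 z.2

/-- The kernel `Tk` restricted to the pairs in `Far n a`. -/
def Ta {n : ℕ} (p s a : ℝ) (z : Heis n × Heis n) : ℝ := (Far n a).indicator (Tk p s) z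

lemma measurable_Tk {n : ℕ} (p s : ℝ) : Measurable (Tk p s : Heis n × Heis n → ℝ) :=
  ((measurable_Jp p).comp (((measurable_prof s).comp (measurable_x1.comp measurable_fst)).sub
    ((measurable_prof s).comp (measurable_x1.comp measurable_snd)))).mul (measurable_Kk _)

lemma measurable_Ta {n : ℕ} (p s a : ℝ) : Measurable (Ta p s a : Heis n × Heis n → ℝ) :=
  (measurable_Tk p s).indicator (measurableSet_Far n a)

lemma Ta_swap {n : ℕ} (p s a : ℝ) (z : Heis n × Heis n) : Ta p s a z.swap = - Ta p s a z := by
  have hm : z.swap ∈ Far n a ↔ z ∈ Far n a := by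
    simp only [Far, Set.mem_ofPred_eq, Prod.fst_swap, Prod.snd_swap]; exact or_comm
  have ht : Tk p s z.swap = - Tk p s z := by
    simp only [Tk, Prod.fst_swap, Prod.snd_swap]
    rw [Kk_symm, ← neg_mul, ← Jp_neg, neg_sub]
  unfold Ta
  by_cases h : z ∈ Far n a
  · rw [Set.indicator_of_mem h, Set.indicator_of_mem (hm.2 h), ht]
  · rw [Set.indicator_of_notMem h, Set.indicator_of_notMem (mt hm.1 h), neg_zero]

lemma Ta_eq {n : ℕ} {p s : ℝ} (hp : 1 < p) (a : ℝ) {ξ : Heis n} (hξ : 0 < x1 ξ) (ξ' : Heis n) :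
    Ta p s a (ξ, ξ') =
      x1 ξ ^ (s * (p - 1)) * (Kk (s * p) ξ ξ' * trunc p s a (x1 ξ' / x1 ξ)) := by
  have hm : (ξ, ξ') ∈ Far n a ↔ x1 ξ' / x1 ξ ∈ farSet a := by
    simp only [Far, farSet, Set.mem_ofPred_eq]
    rw [div_lt_iff₀ hξ, ← mul_div_assoc, one_lt_div hξ]
  unfold Ta trunc
  by_cases h : (ξ, ξ') ∈ Far n a
  · rw [Set.indicator_of_mem h, Set.indicator_of_mem (hm.1 h), Tk]
    simp only
    rw [prof_div hξ (x1 ξ'), prof_of_pos s hξ, ← mul_one_sub,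
      Jp_mul hp (Real.rpow_pos_of_pos hξ s), ← Real.rpow_mul hξ.le]
    ring
  · rw [Set.indicator_of_notMem h, Set.indicator_of_notMem (mt hm.2 h)]; simp

/-- The truncated operator applied to `δ^s` is an explicit multiple of `δ^{-s}`. -/
lemma integral_Ta {n : ℕ} (hn : 1 ≤ n) {p s a : ℝ} (hp : 1 < p) (hs : 0 < s) (hs1 : s < 1)
    (ha : 0 < a) (ha1 : a < 1) {ξ : Heis n} (hξ : 0 < x1 ξ) :
    ∫ ξ', Ta p s a (ξ, ξ') = x1 ξ ^ (-s) * (kap n (s * p) * (prim p s a / (s * p))) := by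
  simp only [Ta_eq hp a hξ]
  have hq : 0 < s * p := by positivity
  rw [integral_const_mul, integral_kernel _ hξ (measurable_trunc p s a), nu_eq hn hq,
    integral_smul_measure, integral_trunc hp hs hs1 ha ha1,
    ENNReal.toReal_ofReal (kap_nonneg hq), smul_eq_mul, ← mul_assoc, ← Real.rpow_add hξ]
  congr 2; ring

lemma lintegral_Ta {n : ℕ} (hn : 1 ≤ n) {p s a : ℝ} (hp : 1 < p) (hs : 0 < s) (hs1 : s < 1)
    (ha : 0 < a) (ha1 : a < 1) : ∃ C : ℝ≥0∞, C < ⊤ ∧ ∀ ξ : Heis n, 0 < x1 ξ →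
      ∫⁻ ξ', ENNReal.ofReal |Ta p s a (ξ, ξ')| = ENNReal.ofReal (x1 ξ ^ (-s)) * C := by
  have hq : 0 < s * p := by positivity
  refine ⟨_, lintegral_nu_lt_top hn hq (lintegral_trunc_lt_top hp hs hs1 ha ha1), fun ξ hξ => ?_⟩
  have hx : 0 < x1 ξ ^ (s * (p - 1)) := Real.rpow_pos_of_pos hξ _
  have hm : Measurable fun τ => ENNReal.ofReal |trunc p s a τ| :=
    (measurable_norm.comp (measurable_trunc p s a)).ennreal_ofReal
  have e : ∀ ξ', ENNReal.ofReal |Ta p s a (ξ, ξ')| = ENNReal.ofReal (x1 ξ ^ (s * (p - 1))) *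
      (ENNReal.ofReal (Kr (s * p) (Hmul (Hinv ξ) ξ')) *
        ENNReal.ofReal |trunc p s a (x1 ξ' / x1 ξ)|) := fun ξ' => by
    rw [Ta_eq hp a hξ, abs_mul, abs_mul, abs_of_pos hx, abs_of_nonneg (Kk_nonneg _ _ _),
      ENNReal.ofReal_mul hx.le, ENNReal.ofReal_mul (Kk_nonneg _ _ _)]
    rfl
  simp only [e]
  rw [lintegral_const_mul' _ _ ENNReal.ofReal_ne_top, lintegral_kernel _ hξ hm, ← mul_assoc,
    ← ENNReal.ofReal_mul hx.le, ← Real.rpow_add hξ]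
  congr 3; ring

/-! ### Weak harmonicity -/

/-- Test functions that vanish off a compact subset `S` of the half-space and have a finite
fractional energy. -/
structure IsTest {n : ℕ} (p s : ℝ) (φ : Heis n → ℝ) (S : Set (Heis n)) : Prop where
  mem : MemW0 n p s (halfSpace n) φ
  cpt : IsCompact S
  sub : S ⊆ halfSpace n
  zero : ∀ ξ, ξ ∉ S → φ ξ = 0

lemma IsTest.lintegral_lt_top {n : ℕ} {p s : ℝ} (hp : 1 < p) {φ : Heis n → ℝ} {S : Set (Heis n)}
    (h : IsTest p s φ S) : ∫⁻ ξ, ENNReal.ofReal |φ ξ| < ⊤ := by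
  have e : ∫⁻ ξ, ENNReal.ofReal |φ ξ| = ∫⁻ ξ in S, ENNReal.ofReal |φ ξ| := by
    rw [setLIntegral_eq_of_support_subset]
    intro ξ hξ
    by_contra hc
    exact hξ (by simp [h.zero ξ hc])
  rw [e]
  have hb : ∫⁻ ξ in S, ENNReal.ofReal |φ ξ| ≤ ∫⁻ ξ in S, (1 + ENNReal.ofReal (|φ ξ| ^ p)) := by
    refine lintegral_mono fun ξ => ?_
    rw [← ENNReal.ofReal_one, ← ENNReal.ofReal_add zero_le_one (by positivity)]
    refine ENNReal.ofReal_le_ofReal ?_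
    have := abs_nonneg (φ ξ)
    rcases le_total |φ ξ| 1 with h1 | h1
    · have := Real.rpow_nonneg this p; linarith
    · have := Real.rpow_le_rpow_of_exponent_le h1 hp.le
      rw [Real.rpow_one] at this; linarith
  refine lt_of_le_of_lt hb ?_
  rw [lintegral_add_left measurable_const, setLIntegral_const, one_mul]
  exact ENNReal.add_lt_top.2 ⟨h.cpt.measure_lt_top,
    lt_of_le_of_lt (lintegral_mono_set h.sub) h.mem.2.1⟩

lemma IsTest.integrable_G {n : ℕ} (hn : 1 ≤ n) {p s a : ℝ} (hp : 1 < p) (hs : 0 < s) (hs1 : s < 1)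
    (ha : 0 < a) (ha1 : a < 1) {φ : Heis n → ℝ} {S : Set (Heis n)} (h : IsTest p s φ S) :
    Integrable (fun z : Heis n × Heis n => φ z.1 * Ta p s a z) := by
  have hm : Measurable (fun z : Heis n × Heis n => φ z.1 * Ta p s a z) :=
    (h.mem.1.comp measurable_fst).mul (measurable_Ta p s a)
  refine ⟨hm.aestronglyMeasurable, ?_⟩
  obtain ⟨C, hC, hb⟩ := lintegral_Ta hn hp hs hs1 ha ha1
  have hc : ContinuousOn (fun ξ : Heis n => x1 ξ ^ (-s)) S :=
    continuous_x1.continuousOn.rpow_const fun ξ hξ => Or.inl (h.sub hξ).ne'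
  obtain ⟨B, hB⟩ := h.cpt.bddAbove_image hc
  rw [hasFiniteIntegral_iff_norm, Measure.volume_eq_prod, lintegral_prod _
    hm.norm.ennreal_ofReal.aemeasurable]
  refine lt_of_le_of_lt (b := ∫⁻ ξ, ENNReal.ofReal |φ ξ| * (ENNReal.ofReal B * C))
    (lintegral_mono fun ξ => ?_) ?_
  · simp only [Real.norm_eq_abs, abs_mul]
    by_cases hξ : ξ ∈ S
    · simp only [ENNReal.ofReal_mul (abs_nonneg (φ ξ))]
      rw [lintegral_const_mul' _ _ ENNReal.ofReal_ne_top, hb ξ (h.sub hξ)]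
      gcongr
      exact hB ⟨ξ, hξ, rfl⟩
    · simp [h.zero ξ hξ]
  · rw [lintegral_mul_const' _ _ (ENNReal.mul_lt_top ENNReal.ofReal_lt_top hC).ne]
    exact ENNReal.mul_lt_top (h.lintegral_lt_top hp)
      (ENNReal.mul_lt_top ENNReal.ofReal_lt_top hC)

lemma IsTest.integral_G {n : ℕ} (hn : 1 ≤ n) {p s a : ℝ} (hp : 1 < p) (hs : 0 < s) (hs1 : s < 1)
    (ha : 0 < a) (ha1 : a < 1) {φ : Heis n → ℝ} {S : Set (Heis n)} (h : IsTest p s φ S) :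
    ∫ z : Heis n × Heis n, φ z.1 * Ta p s a z =
      (∫ ξ, φ ξ * x1 ξ ^ (-s)) * (kap n (s * p) * (prim p s a / (s * p))) := by
  rw [Measure.volume_eq_prod, integral_prod _ (by
    rw [← Measure.volume_eq_prod]; exact h.integrable_G hn hp hs hs1 ha ha1),
    ← integral_mul_const]
  refine integral_congr_ae (Eventually.of_forall fun ξ => ?_)
  simp only
  rw [integral_const_mul]
  by_cases hξ : ξ ∈ S
  · rw [integral_Ta hn hp hs hs1 ha ha1 (h.sub hξ), mul_assoc]
  · rw [h.zero ξ hξ, zero_mul, zero_mul, zero_mul]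

/-- The truncated weak form, symmetrised with the antisymmetry of the kernel. -/
lemma Ta_split {n : ℕ} (p s a : ℝ) (φ : Heis n → ℝ) (z : Heis n × Heis n) :
    Ta p s a z * (φ z.1 - φ z.2) =
      φ z.1 * Ta p s a z + φ z.swap.1 * Ta p s a z.swap := by
  rw [Ta_swap, Prod.fst_swap]; ring

lemma IsTest.integrable_far {n : ℕ} (hn : 1 ≤ n) {p s a : ℝ} (hp : 1 < p) (hs : 0 < s)
    (hs1 : s < 1) (ha : 0 < a) (ha1 : a < 1) {φ : Heis n → ℝ} {S : Set (Heis n)}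
    (h : IsTest p s φ S) :
    Integrable (fun z : Heis n × Heis n => Ta p s a z * (φ z.1 - φ z.2)) := by
  simp only [Ta_split]
  have hG := h.integrable_G hn hp hs hs1 ha ha1
  exact hG.add (by
    rw [Measure.volume_eq_prod] at hG ⊢
    exact hG.swap)

/-- The truncated weak form is twice the pairing of `φ` with the truncated operator, and hence
a multiple of `prim p s a`. -/
lemma IsTest.integral_far {n : ℕ} (hn : 1 ≤ n) {p s a : ℝ} (hp : 1 < p) (hs : 0 < s)
    (hs1 : s < 1) (ha : 0 < a) (ha1 : a < 1) {φ : Heis n → ℝ} {S : Set (Heis n)}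
    (h : IsTest p s φ S) :
    ∫ z : Heis n × Heis n, Ta p s a z * (φ z.1 - φ z.2) =
      2 * ((∫ ξ, φ ξ * x1 ξ ^ (-s)) * (kap n (s * p) * (prim p s a / (s * p)))) := by
  simp only [Ta_split]
  have hG := h.integrable_G hn hp hs hs1 ha ha1
  have e := h.integral_G hn hp hs hs1 ha ha1
  rw [← e, two_mul]
  rw [Measure.volume_eq_prod] at hG ⊢
  refine (integral_add hG hG.swap).trans ?_
  congr 1
  exact integral_prod_swap (fun z : Heis n × Heis n => φ z.1 * Ta p s a z)

lemma mul_rpow_le {p v w : ℝ} (hp : 1 < p) (hv : 0 ≤ v) (hw : 0 ≤ w) :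
    v ^ (p - 1) * w ≤ v ^ p + w ^ p := by
  have key : ∀ x : ℝ, 0 ≤ x → x ^ (p - 1) * x = x ^ p := fun x hx => by
    rcases hx.eq_or_lt with rfl | hx
    · rw [mul_zero, Real.zero_rpow (by linarith)]
    · nth_rewrite 2 [← Real.rpow_one x]
      rw [← Real.rpow_add hx]; congr 1; ring
  rcases le_total v w with h | h
  · calc v ^ (p - 1) * w ≤ w ^ (p - 1) * w := by
          gcongr
      _ = w ^ p := key w hw
      _ ≤ _ := le_add_of_nonneg_left (Real.rpow_nonneg hv _)
  · calc v ^ (p - 1) * w ≤ v ^ (p - 1) * v := by gcongr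
      _ = v ^ p := key v hv
      _ ≤ _ := le_add_of_nonneg_right (Real.rpow_nonneg hw _)

lemma abs_Tk_mul_le {n : ℕ} {p s : ℝ} (hp : 1 < p) (φ : Heis n → ℝ) (z : Heis n × Heis n) :
    |Tk p s z * (φ z.1 - φ z.2)| ≤
      |prof s (x1 z.1) - prof s (x1 z.2)| ^ p * Kk (s * p) z.1 z.2 +
        |φ z.1 - φ z.2| ^ p * Kk (s * p) z.1 z.2 := by
  rw [abs_mul, Tk, abs_mul, abs_Jp hp, abs_of_nonneg (Kk_nonneg _ _ _), ← add_mul, mul_right_comm]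
  exact mul_le_mul_of_nonneg_right (mul_rpow_le hp (abs_nonneg _) (abs_nonneg _))
    (Kk_nonneg _ _ _)

/-- On comparable pairs with a point in the support, the weak form is controlled by the two
energies via `v^{p-1} w ≤ v^p + w^p`. -/
lemma IsTest.integrable_near {n : ℕ} (hn : 1 ≤ n) {p s : ℝ} (hp : 1 < p) (hs : 0 < s)
    (hs1 : s < 1) {φ : Heis n → ℝ} {S : Set (Heis n)} (h : IsTest p s φ S) :
    Integrable (fun z : Heis n × Heis n =>
      (Far n (1 / 2))ᶜ.indicator (fun z => Tk p s z * (φ z.1 - φ z.2)) z) := by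
  have hφ := h.mem.1
  have hF : Measurable fun z : Heis n × Heis n => Tk p s z * (φ z.1 - φ z.2) :=
    (measurable_Tk p s).mul ((hφ.comp measurable_fst).sub (hφ.comp measurable_snd))
  have hm := hF.indicator (measurableSet_Far n (1 / 2)).compl
  refine ⟨hm.aestronglyMeasurable, ?_⟩
  obtain ⟨C, hC, hb⟩ := near_bound hn hp hs hs1 1
  have hx1 : Measurable fun z : Heis n × Heis n => x1 z.1 := measurable_x1.comp measurable_fst
  have hx2 : Measurable fun z : Heis n × Heis n => x1 z.2 := measurable_x1.comp measurable_snd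
  have hS := h.cpt.measurableSet
  have hH : MeasurableSet (halfSpace n) := measurableSet_lt measurable_const measurable_x1
  set A₀ : Heis n × Heis n → ℝ≥0∞ := fun z =>
    ENNReal.ofReal (|prof s (x1 z.1) - prof s (x1 z.2)| ^ p * Kk (s * p) z.1 z.2) with hA₀
  have hA₀m : Measurable A₀ :=
    (((((measurable_prof s).comp hx1).sub ((measurable_prof s).comp hx2)).norm.pow_const p).mul
      (measurable_Kk _)).ennreal_ofReal
  set B₀ : Heis n × Heis n → ℝ≥0∞ := fun z =>
    ENNReal.ofReal (|φ z.1 - φ z.2| ^ p * Kk (s * p) z.1 z.2) with hB₀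
  have hB₀m : Measurable B₀ :=
    ((((hφ.comp measurable_fst).sub (hφ.comp measurable_snd)).norm.pow_const p).mul
      (measurable_Kk _)).ennreal_ofReal
  set E : Set (Heis n × Heis n) := {z | z.1 ∈ S ∧ |1 - x1 z.2 / x1 z.1| ≤ 1} with hE
  have hEm : MeasurableSet E := (measurable_fst hS).inter
    (measurableSet_le ((hx2.div hx1).const_sub 1).norm measurable_const)
  have hAfin : ∫⁻ z, E.indicator A₀ z < ⊤ := by
    rw [Measure.volume_eq_prod, lintegral_prod _ (hA₀m.indicator hEm).aemeasurable]
    refine lt_of_le_of_lt (b := ∫⁻ ξ, S.indicator (fun _ => C) ξ) (lintegral_mono fun ξ => ?_) ?_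
    · by_cases hξ : ξ ∈ S
      · rw [Set.indicator_of_mem hξ]
        refine le_trans (le_of_eq ?_) (hb ξ (h.sub hξ))
        have hM : MeasurableSet {ξ' : Heis n | |1 - x1 ξ' / x1 ξ| ≤ 1} :=
          measurableSet_le ((measurable_x1.div_const _).const_sub 1).norm measurable_const
        rw [← lintegral_indicator hM]
        refine lintegral_congr fun ξ' => ?_
        simp only [Set.indicator, hE, Set.mem_ofPred_eq, hξ, true_and, hA₀]
      · simp [Set.indicator, hE, hξ]
    · rw [lintegral_indicator hS, setLIntegral_const]
      exact ENNReal.mul_lt_top hC h.cpt.measure_lt_top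
  have hAfin' : ∫⁻ z : Heis n × Heis n, E.indicator A₀ z.swap < ⊤ := by
    rw [Measure.volume_eq_prod] at hAfin ⊢
    rwa [lintegral_prod_swap]
  have hBfin : ∫⁻ z, (halfSpace n ×ˢ halfSpace n).indicator B₀ z < ⊤ := by
    rw [lintegral_indicator (hH.prod hH), Measure.volume_eq_prod, ← Measure.prod_restrict,
      lintegral_prod _ hB₀m.aemeasurable]
    exact h.mem.2.2
  rw [hasFiniteIntegral_iff_norm]
  refine lt_of_le_of_lt (b := ∫⁻ z : Heis n × Heis n, (E.indicator A₀ z +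
    (E.indicator A₀ z.swap + (halfSpace n ×ˢ halfSpace n).indicator B₀ z)))
    (lintegral_mono fun z => ?_) ?_
  · by_cases hz : z ∈ Far n (1 / 2)
    · rw [Set.indicator_of_notMem (by simpa using hz)]; simp
    rw [Set.indicator_of_mem (by exact hz)]
    simp only [Far, Set.mem_ofPred_eq, not_or, not_lt] at hz
    have hle : ENNReal.ofReal ‖Tk p s z * (φ z.1 - φ z.2)‖ ≤ A₀ z + B₀ z := by
      rw [hA₀, hB₀]
      simp only
      rw [← ENNReal.ofReal_add (mul_nonneg (by positivity) (Kk_nonneg _ _ _))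
        (mul_nonneg (by positivity) (Kk_nonneg _ _ _))]
      exact ENNReal.ofReal_le_ofReal (abs_Tk_mul_le hp φ z)
    by_cases h1 : z.1 ∈ S
    · have p1 : 0 < x1 z.1 := h.sub h1
      have p2 : 0 < x1 z.2 := by linarith [hz.1]
      have m1 : z ∈ E := ⟨h1, by
        rw [abs_le]
        have : x1 z.2 / x1 z.1 ≤ 2 := by rw [div_le_iff₀ p1]; linarith [hz.2]
        have : 0 < x1 z.2 / x1 z.1 := div_pos p2 p1
        constructor <;> linarith⟩
      rw [Set.indicator_of_mem m1,
        Set.indicator_of_mem (show z ∈ halfSpace n ×ˢ halfSpace n from ⟨p1, p2⟩)]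
      refine hle.trans ?_
      gcongr
      exact le_add_self
    by_cases h2 : z.2 ∈ S
    · have p2 : 0 < x1 z.2 := h.sub h2
      have p1 : 0 < x1 z.1 := by linarith [hz.2]
      have m1 : z.swap ∈ E := ⟨h2, by
        rw [abs_le]
        simp only [Prod.fst_swap, Prod.snd_swap]
        have : x1 z.1 / x1 z.2 ≤ 2 := by rw [div_le_iff₀ p2]; linarith [hz.1]
        have : 0 < x1 z.1 / x1 z.2 := div_pos p1 p2
        constructor <;> linarith⟩
      have es : A₀ z.swap = A₀ z := by
        simp only [hA₀, Prod.fst_swap, Prod.snd_swap]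
        rw [abs_sub_comm, Kk_symm]
      rw [Set.indicator_of_mem m1,
        Set.indicator_of_mem (show z ∈ halfSpace n ×ˢ halfSpace n from ⟨p1, p2⟩), es]
      exact hle.trans le_add_self
    · rw [h.zero _ h1, h.zero _ h2]; simp
  · have hsw : Measurable fun z : Heis n × Heis n => E.indicator A₀ z.swap :=
      (hA₀m.indicator hEm).comp measurable_swap
    rw [lintegral_add_left (hA₀m.indicator hEm), lintegral_add_left hsw]
    exact ENNReal.add_lt_top.2 ⟨hAfin, ENNReal.add_lt_top.2 ⟨hAfin', hBfin⟩⟩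

lemma IsTest.integrable {n : ℕ} (hn : 1 ≤ n) {p s : ℝ} (hp : 1 < p) (hs : 0 < s)
    (hs1 : s < 1) {φ : Heis n → ℝ} {S : Set (Heis n)} (h : IsTest p s φ S) :
    Integrable (fun z : Heis n × Heis n => Tk p s z * (φ z.1 - φ z.2)) := by
  refine ((h.integrable_far hn hp hs hs1 (a := 1 / 2) (by norm_num) (by norm_num)).add
    (h.integrable_near hn hp hs hs1)).congr (Eventually.of_forall fun z => ?_)
  simp only [Pi.add_apply, Ta]
  by_cases hz : z ∈ Far n (1 / 2)
  · rw [Set.indicator_of_mem hz, Set.indicator_of_notMem (by simpa using hz), add_zero]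
  · rw [Set.indicator_of_notMem hz, Set.indicator_of_mem (by exact hz), zero_mul, zero_add]

/-- Off the diagonal `x₁ = x₁'` the truncation is eventually inactive; on it the kernel vanishes. -/
lemma tendsto_Ta {n : ℕ} (p s : ℝ) (z : Heis n × Heis n) :
    Tendsto (fun a => Ta p s a z) (𝓝[<] 1) (𝓝 (Tk p s z)) := by
  have hcont : ∀ x : ℝ, Tendsto (fun a : ℝ => a * x) (𝓝[<] 1) (𝓝 x) := fun x => by
    have : Tendsto (fun a : ℝ => a * x) (𝓝 1) (𝓝 (1 * x)) :=
      (continuous_mul_const x).tendsto 1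
    rw [one_mul] at this
    exact this.mono_left nhdsWithin_le_nhds
  rcases eq_or_ne (x1 z.1) (x1 z.2) with e | e
  · have : Tk p s z = 0 := by rw [Tk, e, sub_self, Jp_zero, zero_mul]
    have : ∀ a, Ta p s a z = Tk p s z := fun a => by
      by_cases h : z ∈ Far n a
      · rw [Ta, Set.indicator_of_mem h]
      · rw [Ta, Set.indicator_of_notMem h, this]
    simp only [this]
    exact tendsto_const_nhds
  · refine tendsto_const_nhds.congr' ?_
    rcases lt_or_gt_of_ne e with l | l
    · filter_upwards [(hcont (x1 z.2)).eventually (lt_mem_nhds l)] with a ha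
      rw [Ta, Set.indicator_of_mem (show z ∈ Far n a from Or.inr ha)]
    · filter_upwards [(hcont (x1 z.1)).eventually (lt_mem_nhds l)] with a ha
      rw [Ta, Set.indicator_of_mem (show z ∈ Far n a from Or.inl ha)]

lemma IsTest.integral_eq_zero {n : ℕ} (hn : 1 ≤ n) {p s : ℝ} (hp : 1 < p) (hs : 0 < s)
    (hs1 : s < 1) {φ : Heis n → ℝ} {S : Set (Heis n)} (h : IsTest p s φ S) :
    ∫ z : Heis n × Heis n, Tk p s z * (φ z.1 - φ z.2) = 0 := by
  have hφ := h.mem.1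
  have hlim : Tendsto (fun a => ∫ z : Heis n × Heis n, Ta p s a z * (φ z.1 - φ z.2)) (𝓝[<] 1)
      (𝓝 (∫ z : Heis n × Heis n, Tk p s z * (φ z.1 - φ z.2))) := by
    refine tendsto_integral_filter_of_dominated_convergence
      (fun z => ‖Tk p s z * (φ z.1 - φ z.2)‖) (Eventually.of_forall fun a => ?_)
      (Eventually.of_forall fun a => Eventually.of_forall fun z => ?_)
      (h.integrable hn hp hs hs1).norm
      (Eventually.of_forall fun z => (tendsto_Ta p s z).mul_const _)
    · exact ((measurable_Ta p s a).mul
        ((hφ.comp measurable_fst).sub (hφ.comp measurable_snd))).aestronglyMeasurable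
    · rw [norm_mul, norm_mul]
      exact mul_le_mul_of_nonneg_right (norm_indicator_le_norm_self _ _) (norm_nonneg _)
  refine tendsto_nhds_unique hlim ?_
  have h0 : Tendsto (fun a => 2 * ((∫ ξ : Heis n, φ ξ * x1 ξ ^ (-s)) *
      (kap n (s * p) * (prim p s a / (s * p))))) (𝓝[<] 1) (𝓝 0) := by
    have := ((((tendsto_prim hp hs hs1).div_const (s * p)).const_mul
      (kap n (s * p))).const_mul (∫ ξ : Heis n, φ ξ * x1 ξ ^ (-s))).const_mul 2
    simpa using this
  refine h0.congr' ?_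
  filter_upwards [Ioo_mem_nhdsLT (show (0 : ℝ) < 1 by norm_num)] with a ha
  rw [h.integral_far hn hp hs hs1 ha.1 ha.2]

/-- Proposition 3.6: the `s`-th power of the distance function
`δ(ξ)^s = ((x₁)₊)^s` belongs to `W^{s,p}_loc(ℍⁿ₊) ∩ L^{p-1}_{sp}(ℍⁿ)` and is weakly
harmonic on `ℍⁿ₊`. -/
theorem distance_power_weakly_harmonic (n : ℕ) (hn : 1 ≤ n) (p s : ℝ)
    (hp1 : 1 < p) (hs0 : 0 < s) (hs1 : s < 1) :
    (MemWloc0 n p s (fun ξ => (max (x1 ξ) 0) ^ s) ∧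
      MemLsp0 n p s (fun ξ => (max (x1 ξ) 0) ^ s)) ∧
    ∀ φ : Heis n → ℝ, MemW0 n p s (halfSpace n) φ → (∀ ξ, 0 ≤ φ ξ) →
      HasCompactSupport φ → tsupport φ ⊆ halfSpace n →
      (∫ ξ, ∫ ξ', Jp p ((max (x1 ξ) 0) ^ s - (max (x1 ξ') 0) ^ s) * (φ ξ - φ ξ') /
          hd (Hmul (Hinv ξ) ξ') ^ (hQ n + s * p)) = 0 := by
  refine ⟨⟨memWloc hn hp1 hs0 hs1, memLsp hp1 hs0⟩, fun φ hφ _ hc hsub => ?_⟩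
  have h : IsTest p s φ (tsupport φ) :=
    ⟨hφ, hc, hsub, fun ξ hξ => image_eq_zero_of_notMem_tsupport hξ⟩
  have hi := h.integrable hn hp1 hs0 hs1
  have h0 := h.integral_eq_zero hn hp1 hs0 hs1
  rw [Measure.volume_eq_prod] at hi h0
  rw [integral_prod _ hi] at h0
  refine Eq.trans ?_ h0
  refine integral_congr_ae (Eventually.of_forall fun ξ => ?_)
  refine integral_congr_ae (Eventually.of_forall fun ξ' => ?_)
  simp only [Tk, Kk, Kr, prof]
  rw [div_eq_mul_inv]
  ring
end
end

section
/- Let 0 < s < 1. For every a, b > 0, |a^s − b^s| / (a^s + b^s) ≥ (s/2) · |a − b| / max{a, b}. -/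
/-!
Both sides are symmetric in `a` and `b`, so assume `b ≤ a` and put `t = b / a ≤ 1`. Bernoulli's
inequality for exponents in `[0, 1]` gives `t ^ s ≤ 1 - s * (1 - t)`, that is
`a ^ s - b ^ s ≥ s * ((a - b) / a) * a ^ s`, and `a ^ s ≥ (a ^ s + b ^ s) / 2` by monotonicity.
-/

open MeasureTheory Real Filter Topology ENNReal

noncomputable section

/-- The case `b ≤ a` of the estimate, cleared of absolute values and of the maximum. -/
lemma power_quotient_lower_bound_of_le {s a b : ℝ} (hs0 : 0 < s) (hs1 : s < 1)
    (hb : 0 < b) (hba : b ≤ a) :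
    s / 2 * ((a - b) / a) ≤ (a ^ s - b ^ s) / (a ^ s + b ^ s) := by
  have ha : 0 < a := hb.trans_le hba
  have hA : 0 < a ^ s := rpow_pos_of_pos ha s
  have hB : 0 < b ^ s := rpow_pos_of_pos hb s
  have hBA : b ^ s ≤ a ^ s := rpow_le_rpow hb.le hba hs0.le
  have hu : 0 ≤ (a - b) / a := div_nonneg (sub_nonneg.2 hba) ha.le
  have hbern : (b / a) ^ s ≤ 1 - s * ((a - b) / a) := by
    have h := rpow_one_add_le_one_add_mul_self (s := b / a - 1)
      (by linarith [div_pos hb ha]) hs0.le hs1.le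
    have e : (a - b) / a = 1 - b / a := by field_simp
    rw [add_sub_cancel] at h
    rw [e]
    linarith
  rw [div_rpow hb.le ha.le, div_le_iff₀ hA] at hbern
  rw [le_div_iff₀ (by positivity)]
  nlinarith [mul_nonneg (mul_nonneg hs0.le hu) (sub_nonneg.2 hBA)]

/-- Lemma 4.2: for `0 < s < 1` and `a, b > 0`,
`|a^s − b^s|/(a^s + b^s) ≥ (s/2)|a − b|/max{a,b}`. -/
theorem power_quotient_lower_bound (s : ℝ) (hs0 : 0 < s) (hs1 : s < 1) :
    ∀ a b : ℝ, 0 < a → 0 < b →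
      s / 2 * (|a - b| / max a b) ≤ |a ^ s - b ^ s| / (a ^ s + b ^ s) := by
  intro a b ha hb
  rcases le_total b a with h | h
  · rw [max_eq_left h, abs_of_nonneg (sub_nonneg.2 h),
      abs_of_nonneg (sub_nonneg.2 (rpow_le_rpow hb.le h hs0.le))]
    exact power_quotient_lower_bound_of_le hs0 hs1 hb h
  · rw [max_eq_right h, abs_sub_comm a b, abs_sub_comm (a ^ s), add_comm (a ^ s),
      abs_of_nonneg (sub_nonneg.2 h),
      abs_of_nonneg (sub_nonneg.2 (rpow_le_rpow ha.le h hs0.le))]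
    exact power_quotient_lower_bound_of_le hs0 hs1 ha h
end
end
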